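/- arXiv:2407.16163 — 2 statements merged into one kernel-verified Lean document; each statement's English description precedes it below -/
import Mathlib

section
/- Let K be a finite set with |K| = γ ≥ 2, let a_k (k ∈ K) be nonzero complex numbers, and let g_k (k ∈ K) be entire functions, none identically zero, satisfying Σ_{k∈K} a_k g_k^d = 0 identically, with d > γ(γ−2). Then there exist distinct indices i, j ∈ K such that g_i/g_j is a nonzero constant. -/
open Filter Topology Metric Set Real Function.locallyFinsuppWithin MeromorphicOn ValueDistribution

/-- The logarithmic counting function of an effective divisor controls the number of its points. -/
lemma sum_mul_log_le_logCounting {E : Function.locallyFinsupp ℂ ℤ} (hE : 0 ≤ E) (s : Finset ℂ)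
    {ρ r : ℝ} (hs : ∀ a ∈ s, ‖a‖ ≤ ρ) (hρ : 1 ≤ ρ) (hr : ρ ≤ r) :
    (∑ a ∈ s, (E a : ℝ)) * log (r / ρ) ≤ logCounting E r := by
  classical
  have hle : ∑ a ∈ s, E a • single a (1 : ℤ) ≤ E := by
    intro z
    simp only [coe_sum, coe_zsmul, Finset.sum_apply, Pi.smul_apply, single_apply, smul_eq_mul,
      mul_ite, mul_one, mul_zero]
    by_cases hz : z ∈ s
    · rw [Finset.sum_eq_single z] <;> aesop
    · rw [Finset.sum_eq_zero]
      · exact hE z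
      · aesop
  refine le_trans ?_ (logCounting_le hle (hρ.trans hr))
  simp only [map_sum, map_zsmul, Finset.sum_apply, zsmul_eq_mul, Finset.sum_mul]
  refine Finset.sum_le_sum fun a ha ↦ ?_
  simp only [Pi.mul_apply, Pi.intCast_apply]
  refine mul_le_mul_of_nonneg_left ?_ (by exact_mod_cast hE a)
  rw [logCounting_single_eq_log_sub_const ((hs a ha).trans hr),
    Real.log_div (by linarith) (by linarith)]
  rcases eq_or_ne a 0 with rfl | h0
  · simpa using Real.log_nonneg hρ
  · have := Real.log_le_log (norm_pos_iff.2 h0) (hs a ha)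
    rw [Int.cast_one, one_mul]
    linarith

/-- A form of Borel's growth lemma: a monotone function which is bounded by the logarithm of its
value at a slightly larger point grows at most logarithmically. -/
lemma le_log_of_le_log_of_monotoneOn {σ : ℝ → ℝ} (hσ : MonotoneOn σ (Ioi 0)) {C : ℝ} (hC : 0 ≤ C)
    (h : ∀ r R, 1 ≤ r → r < R → R ≤ r + 1 →
      σ r ≤ C * (1 + log⁺ (σ R) + log (1 / (R - r)) + log R)) :
    ∃ C', ∀ r, 1 ≤ r → σ r ≤ C' * (1 + log (r + 1)) := by
  set K : ℝ := 4 * (C + 1) with hK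
  have hK1 : 1 ≤ K := by linarith
  have hlogK : 0 ≤ log K := log_nonneg hK1
  refine ⟨2 * C * (5 + log K), fun r₀ hr₀ ↦ ?_⟩
  set ρ : ℝ := r₀ + 1 with hρ
  have hlogρ : 0 ≤ log ρ := log_nonneg (by linarith)
  set S : Set ℝ := (fun r ↦ (ρ - r) * max (σ r) 0) '' Ico r₀ ρ with hS
  have hbdd : BddAbove S := by
    refine ⟨max (σ ρ) 0, ?_⟩
    rintro _ ⟨r, ⟨h1, h2⟩, rfl⟩
    have : σ r ≤ σ ρ := hσ (by simp; linarith) (by simp; linarith) h2.le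
    calc (ρ - r) * max (σ r) 0 ≤ 1 * max (σ ρ) 0 := by
          gcongr
          linarith
      _ = _ := one_mul _
  set M : ℝ := sSup S with hM
  have hle : ∀ r ∈ Ico r₀ ρ, (ρ - r) * max (σ r) 0 ≤ M := fun r hr ↦
    le_csSup hbdd (mem_image_of_mem _ hr)
  have hr₀mem : r₀ ∈ Ico r₀ ρ := ⟨le_rfl, by linarith⟩
  have hM0 : 0 ≤ M := le_trans (mul_nonneg (by linarith) (le_max_right _ _)) (hle r₀ hr₀mem)
  have key : M ≤ C * (5 + log⁺ (2 * M) + log ρ) := by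
    refine csSup_le (Set.Nonempty.image _ ⟨r₀, hr₀mem⟩) ?_
    rintro _ ⟨r, ⟨h1, h2⟩, rfl⟩
    have hL : 0 ≤ C * (5 + log⁺ (2 * M) + log ρ) := by
      have := posLog_nonneg (x := 2 * M)
      positivity
    have hx0 : 0 < ρ - r := by linarith
    have hx1 : ρ - r ≤ 1 := by linarith
    rcases le_total (σ r) 0 with hs | hs
    · simpa [max_eq_right hs] using hL
    beta_reduce
    rw [max_eq_left hs]
    set x := ρ - r with hx
    set R := (r + ρ) / 2 with hR
    have hRr : R - r = x / 2 := by rw [hR, hx]; ring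
    have hρR : ρ - R = x / 2 := by rw [hR, hx]; ring
    have h3 := h r R (by linarith) (by linarith) (by linarith)
    have h4 := hle R ⟨by linarith, by linarith⟩
    have h5 : log⁺ (σ R) ≤ log⁺ (2 * M) + log (1 / x) := by
      have h6 : σ R ≤ 2 * M * (1 / x) := by
        rw [mul_one_div, le_div_iff₀ hx0]
        have := le_max_left (σ R) 0
        rw [hρR] at h4
        nlinarith
      have h7 : log⁺ (1 / x) = log (1 / x) := by
        apply posLog_eq_log
        rw [abs_of_pos (by positivity), le_div_iff₀ hx0]
        linarith
      rcases le_total (σ R) 0 with hs' | hs'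
      · have h8 : σ r ≤ σ R := hσ (by simp; linarith) (by simp; linarith) (by linarith)
        have : σ R = 0 := by linarith
        rw [this, posLog_zero]
        have := posLog_nonneg (x := 2 * M)
        have := posLog_nonneg (x := 1 / x)
        linarith
      · calc log⁺ (σ R) ≤ log⁺ (2 * M * (1 / x)) := posLog_le_posLog hs' h6
          _ ≤ _ := by rw [← h7]; exact posLog_mul
    have h9 : log (1 / (R - r)) = log 2 + log (1 / x) := by
      rw [hRr, ← log_mul (by norm_num) (by positivity)]
      congr 1
      field_simp
    have h10 : log R ≤ log ρ := log_le_log (by linarith) (by linarith)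
    have h11 : x * log (1 / x) ≤ 1 := by
      have := log_le_sub_one_of_pos (x := 1 / x) (by positivity)
      calc x * log (1 / x) ≤ x * (1 / x - 1) := by gcongr
        _ = 1 - x := by field_simp
        _ ≤ 1 := by linarith
    have h12 : log 2 ≤ 1 := by linarith [log_two_lt_d9]
    have h13 := posLog_nonneg (x := 2 * M)
    calc x * σ r ≤ x * (C * (1 + (log⁺ (2 * M) + log (1 / x)) + (1 + log (1 / x)) + log ρ)) := by
          gcongr
          refine h3.trans ?_
          gcongr
          rw [h9]
          linarith
      _ = C * (x * (2 + log⁺ (2 * M) + log ρ) + 2 * (x * log (1 / x))) := by ring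
      _ ≤ C * (1 * (2 + log⁺ (2 * M) + log ρ) + 2 * 1) := by gcongr
      _ ≤ _ := mul_le_mul_of_nonneg_left (by linarith) hC
  have h14 : log⁺ (2 * M) ≤ 2 * M / K + log K := by
    rcases le_total (2 * M) 1 with h15 | h15
    · rw [posLog_eq_zero_iff _ |>.2 (by rwa [abs_of_nonneg (by positivity)])]
      positivity
    · rw [posLog_eq_log (by rwa [abs_of_nonneg (by positivity)])]
      have := log_le_sub_one_of_pos (x := 2 * M / K) (by positivity)
      rw [log_div (by linarith) (by linarith)] at this
      linarith
  have h16 : C * (2 * M / K) ≤ M / 2 := by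
    rw [mul_div_assoc', div_le_iff₀ (by linarith), hK]
    nlinarith
  have h17 : M ≤ 2 * C * (5 + log K) * (1 + log ρ) := by
    have : C * (5 + log⁺ (2 * M) + log ρ) ≤ C * (5 + (2 * M / K + log K) + log ρ) := by gcongr
    have h18 : M ≤ 2 * C * (5 + log K + log ρ) := by nlinarith
    refine h18.trans ?_
    rw [mul_assoc (2 * C)]
    exact mul_le_mul_of_nonneg_left (by nlinarith [mul_nonneg hlogK hlogρ]) (by positivity)
  have := hle r₀ hr₀mem
  have h19 := le_max_left (σ r₀) 0
  rw [hρ, add_sub_cancel_left, one_mul] at this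
  exact (h19.trans this).trans h17

/-- A meromorphic function with linearly many `c`-points has a characteristic function which grows
faster than the logarithm. -/
lemma not_characteristic_le_log {φ : ℂ → ℂ} (hφ : Meromorphic φ) (c z₀ w : ℂ) (hw : w ≠ 0)
    (h : ∀ m : ℕ, 1 ≤ divisor (fun z ↦ φ z - c) univ (z₀ + m * w)) (C : ℝ) :
    ∃ r, 1 ≤ r ∧ C * (1 + log (r + 1)) < characteristic φ ⊤ r := by
  by_contra! hcon
  set F : ℂ → ℂ := fun z ↦ φ z - c with hF
  have hFm : Meromorphic F := by fun_prop
  set c₁ := max |log ‖F 0‖| |log ‖meromorphicTrailingCoeffAt F 0‖| with hc₁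
  set c₂ := log⁺ ‖c‖ + log 2 with hc₂
  set A : ℝ := ‖z₀‖ + 1 with hA
  have hA1 : 1 ≤ A := by have := norm_nonneg z₀; linarith
  have hw0 : 0 < ‖w‖ := norm_pos_iff.2 hw
  have key : ∀ m : ℕ, (m : ℝ) ≤ C * (1 + log (exp 1 * (A + m * ‖w‖) + 1)) + (c₁ + c₂) := by
    intro m
    set ρ : ℝ := A + m * ‖w‖ with hρ
    have hρ1 : 1 ≤ ρ := by have : 0 ≤ m * ‖w‖ := by positivity
                           linarith
    set r := exp 1 * ρ with hr
    have he : 1 ≤ exp 1 := one_le_exp (by norm_num)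
    have hρr : ρ ≤ r := by nlinarith
    have h1 := sum_mul_log_le_logCounting (E := (divisor F univ)⁺) (posPart_nonneg _)
      ((Finset.range m).image fun k : ℕ ↦ z₀ + k * w) (ρ := ρ) (r := r) (by
        intro a ha
        obtain ⟨k, hk, rfl⟩ := Finset.mem_image.1 ha
        have : (k : ℝ) ≤ m := by exact_mod_cast (Finset.mem_range.1 hk).le
        calc ‖z₀ + k * w‖ ≤ ‖z₀‖ + k * ‖w‖ := by
              refine (norm_add_le _ _).trans ?_
              simp
          _ ≤ ‖z₀‖ + m * ‖w‖ := by gcongr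
          _ ≤ ρ := by linarith) hρ1 hρr
    have h2 : log (r / ρ) = 1 := by
      rw [hr, mul_div_cancel_right₀ _ (by linarith), log_exp]
    rw [h2, mul_one, Finset.sum_image (by
      intro a _ b _ hab
      simpa [hw] using hab)] at h1
    have h3 : (m : ℝ) ≤ ∑ k ∈ Finset.range m, (((divisor F univ)⁺ (z₀ + k * w) : ℤ) : ℝ) := by
      calc (m : ℝ) = ∑ k ∈ Finset.range m, (1 : ℝ) := by simp
        _ ≤ _ := by
          refine Finset.sum_le_sum fun k _ ↦ ?_
          have : (divisor F univ) (z₀ + k * w) ≤ (divisor F univ)⁺ (z₀ + k * w) :=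
            le_posPart (divisor F univ) _
          exact_mod_cast (h k).trans this
    rw [← logCounting_zero, ← logCounting_inv] at h1
    have h4 : logCounting F⁻¹ ⊤ r ≤ characteristic F⁻¹ ⊤ r := by
      simpa [characteristic] using proximity_nonneg (f := F⁻¹) (a := ⊤) r
    have h5 := (abs_le.1 (characteristic_sub_characteristic_inv_le (R := r) hFm)).1
    have h6 := (abs_le.1 (abs_characteristic_sub_characteristic_shift_le (r := r) (a₀ := c) hφ)).1
    have h7 := hcon r (by linarith)
    linarith
  set K : ℝ := 2 * (|C| + 1) * (exp 1 * ‖w‖) with hK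
  have hK0 : 0 < K := by positivity
  obtain ⟨m, hm⟩ := exists_nat_gt
    (2 * (|C| * (1 + (exp 1 * A + 1) / K + log K) + (c₁ + c₂)))
  have hy1 : 1 ≤ exp 1 * (A + m * ‖w‖) + 1 := by
    have : 0 ≤ exp 1 * (A + m * ‖w‖) := by positivity
    linarith
  have h8 : log (exp 1 * (A + m * ‖w‖) + 1) ≤ (exp 1 * (A + m * ‖w‖) + 1) / K + log K := by
    have := log_le_sub_one_of_pos (x := (exp 1 * (A + m * ‖w‖) + 1) / K) (by positivity)
    rw [log_div (by linarith) hK0.ne'] at this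
    linarith
  have h9 : |C| * (exp 1 * (m * ‖w‖) / K) ≤ m / 2 := by
    rw [mul_div_assoc', div_le_iff₀ hK0, hK]
    have : 0 ≤ m * (exp 1 * ‖w‖) := by positivity
    nlinarith
  have h10 : C * (1 + log (exp 1 * (A + m * ‖w‖) + 1)) ≤
      |C| * (1 + ((exp 1 * (A + m * ‖w‖) + 1) / K + log K)) := by
    have := log_nonneg hy1
    gcongr
    exact le_abs_self C
  have h11 : (exp 1 * (A + m * ‖w‖) + 1) / K =
      (exp 1 * A + 1) / K + exp 1 * (m * ‖w‖) / K := by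
    ring
  have h12 := key m
  rw [h11] at h10
  nlinarith

/-- The Wronskian determinant of `n` functions of one complex variable. -/
noncomputable def wronskianDet {n : ℕ} (f : Fin n → ℂ → ℂ) (z : ℂ) : ℂ :=
  (Matrix.of fun k i : Fin n ↦ iteratedDeriv i (f k) z).det

lemma AnalyticAt.iteratedDeriv_fun {f : ℂ → ℂ} {z : ℂ} (hf : AnalyticAt ℂ f z) (i : ℕ) :
    AnalyticAt ℂ (iteratedDeriv i f) z := by
  induction i with
  | zero => simpa using hf
  | succ i ih => rw [iteratedDeriv_succ]; exact ih.deriv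

lemma wronskianDet_congr {n : ℕ} {f g : Fin n → ℂ → ℂ} {z : ℂ} (h : ∀ k, f k =ᶠ[𝓝 z] g k) :
    wronskianDet f z = wronskianDet g z := by
  unfold wronskianDet
  congr 1
  ext k i
  exact (h k).iteratedDeriv_eq i

lemma analyticAt_det {n : ℕ} {A : ℂ → Matrix (Fin n) (Fin n) ℂ} {z : ℂ}
    (hA : ∀ i j, AnalyticAt ℂ (fun z ↦ A z i j) z) : AnalyticAt ℂ (fun z ↦ (A z).det) z := by
  simp only [Matrix.det_apply]
  refine Finset.analyticAt_fun_sum _ fun σ _ ↦ ?_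
  simp only [Units.smul_def, zsmul_eq_mul]
  exact analyticAt_const.mul (Finset.analyticAt_fun_prod _ fun i _ ↦ hA _ _)

lemma analyticAt_wronskianDet {n : ℕ} {f : Fin n → ℂ → ℂ} {z : ℂ}
    (hf : ∀ k, AnalyticAt ℂ (f k) z) : AnalyticAt ℂ (wronskianDet f) z :=
  analyticAt_det fun k i ↦ (hf k).iteratedDeriv_fun i

lemma wronskianDet_mul {n : ℕ} {h : ℂ → ℂ} {f : Fin n → ℂ → ℂ} {z : ℂ} (hh : AnalyticAt ℂ h z)
    (hf : ∀ k, AnalyticAt ℂ (f k) z) :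
    wronskianDet (fun k z ↦ h z * f k z) z = h z ^ n * wronskianDet f z := by
  set T : Matrix (Fin n) (Fin n) ℂ := Matrix.of fun j i ↦
    if j ≤ i then ((i : ℕ).choose j : ℂ) * iteratedDeriv (i - j : ℕ) h z else 0 with hT
  have hTd : T.det = h z ^ n := by
    rw [Matrix.det_of_isUpperTriangular]
    · simp [hT]
    · intro i j hij
      have : ¬ i ≤ j := not_le.2 hij
      simp [hT, this]
  have key : (Matrix.of fun k i : Fin n ↦ iteratedDeriv i (fun z ↦ h z * f k z) z) =
      (Matrix.of fun k i : Fin n ↦ iteratedDeriv i (f k) z) * T := by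
    ext k i
    have h1 : (fun z ↦ h z * f k z) = fun z ↦ f k z * h z := by
      ext z; ring
    rw [Matrix.of_apply, h1, iteratedDeriv_fun_mul (hf k).contDiffAt hh.contDiffAt,
      Matrix.mul_apply, Finset.sum_range]
    simp only [hT, Matrix.of_apply]
    rw [← Finset.sum_subset (Finset.subset_univ
      (Finset.univ.map (Fin.castLEEmb (show (i : ℕ) + 1 ≤ n from i.2))))]
    · rw [Finset.sum_map]
      refine Finset.sum_congr rfl fun j _ ↦ ?_
      have : Fin.castLE (show (i : ℕ) + 1 ≤ n from i.2) j ≤ i := by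
        rw [Fin.le_def]; exact Nat.lt_succ_iff.1 j.2
      simp only [Fin.castLEEmb_apply, this, if_true, Fin.val_castLE]
      ring
    · intro j _ hj
      have : ¬ j ≤ i := by
        intro hji
        apply hj
        simp only [Finset.mem_map, Finset.mem_univ, true_and]
        exact ⟨⟨j, Nat.lt_succ_iff.2 hji⟩, rfl⟩
      simp [this]
  unfold wronskianDet
  rw [key, Matrix.det_mul, hTd, mul_comm]

lemma wronskianDet_one_cons {n : ℕ} {f : Fin n → ℂ → ℂ} {z : ℂ} :
    wronskianDet (Fin.cons (fun _ ↦ 1) f : Fin (n + 1) → ℂ → ℂ) z =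
      wronskianDet (fun k ↦ deriv (f k)) z := by
  unfold wronskianDet
  rw [Matrix.det_succ_row_zero, Fin.sum_univ_succ, Finset.sum_eq_zero]
  · simp only [Matrix.of_apply, Fin.cons_zero, Fin.val_zero, iteratedDeriv_zero, pow_zero, one_mul,
      mul_one, add_zero]
    congr 1
    ext k i
    simp [iteratedDeriv_succ']
  · intro i _
    simp [iteratedDeriv_const]

/-- If the Wronskian vanishes identically on an open set, the functions are linearly dependent on
a smaller one. -/
lemma exists_sum_eq_zero_of_wronskianDet_eq_zero {n : ℕ} {f : Fin n → ℂ → ℂ} {U : Set ℂ}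
    (hU : IsOpen U) (hne : U.Nonempty) (hf : ∀ k, AnalyticOnNhd ℂ (f k) U)
    (hw : ∀ z ∈ U, wronskianDet f z = 0) :
    ∃ c : Fin n → ℂ, c ≠ 0 ∧ ∃ V ⊆ U, IsOpen V ∧ V.Nonempty ∧ ∀ z ∈ V, ∑ k, c k * f k z = 0 := by
  induction n generalizing U with
  | zero =>
    obtain ⟨z, hz⟩ := hne
    simpa [wronskianDet] using hw z hz
  | succ n ih =>
    by_cases h0 : ∀ z ∈ U, f 0 z = 0
    · refine ⟨Pi.single 0 1, by simp, U, le_rfl, hU, hne, fun z hz ↦ ?_⟩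
      rw [Finset.sum_eq_single 0] <;> simp +contextual [h0 z hz]
    push Not at h0
    obtain ⟨z₀, hz₀, hfz₀⟩ := h0
    set U' := {z ∈ U | f 0 z ≠ 0} with hU'
    have hU'o : IsOpen U' :=
      (hf 0).continuousOn.isOpen_inter_preimage hU isOpen_compl_singleton
    set u : Fin n → ℂ → ℂ := fun k z ↦ f k.succ z / f 0 z with hu
    have hua : ∀ k, AnalyticOnNhd ℂ (u k) U' := fun k z hz ↦
      (hf _ z hz.1).fun_div (hf 0 z hz.1) hz.2
    have hwu : ∀ z ∈ U', wronskianDet (fun k ↦ deriv (u k)) z = 0 := by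
      intro z hz
      have h1 : wronskianDet f z = wronskianDet
          (fun k z ↦ f 0 z * (Fin.cons (fun _ ↦ 1) u : Fin (n + 1) → ℂ → ℂ) k z) z := by
        refine wronskianDet_congr fun k ↦ ?_
        filter_upwards [hU'o.mem_nhds hz] with y hy
        refine Fin.cases ?_ (fun k ↦ ?_) k
        · simp
        · simp only [Fin.cons_succ, hu]
          rw [mul_div_cancel₀ _ hy.2]
      rw [hw z hz.1, wronskianDet_mul (hf 0 z hz.1), wronskianDet_one_cons] at h1
      · simpa [hz.2] using h1.symm
      · refine Fin.cases ?_ fun k ↦ ?_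
        · exact analyticAt_const
        · exact hua k z hz
    obtain ⟨c, hc, V, hVU, hVo, ⟨y, hy⟩, hV⟩ := ih hU'o ⟨z₀, hz₀, hfz₀⟩
      (fun k z hz ↦ (hua k z hz).deriv) hwu
    obtain ⟨ε, hε, hball⟩ := Metric.isOpen_iff.1 hVo y hy
    set S : ℂ → ℂ := fun z ↦ ∑ k, c k * u k z with hS
    have hconst : ∀ z ∈ ball y ε, S z = S y := by
      intro z hz
      refine isOpen_ball.is_const_of_deriv_eq_zero (convex_ball y ε).isPreconnected ?_ ?_ hz
        (mem_ball_self hε)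
      · intro x hx
        have : DifferentiableAt ℂ S x := DifferentiableAt.fun_sum fun k _ ↦
          ((hua k x (hVU (hball hx))).differentiableAt).const_mul _
        exact this.differentiableWithinAt
      · intro x hx
        rw [hS, deriv_fun_sum fun k _ ↦
          ((hua k x (hVU (hball hx))).differentiableAt).const_mul _, Pi.zero_apply,
          ← hV x (hball hx)]
        refine Finset.sum_congr rfl fun k _ ↦ ?_
        rw [deriv_const_mul _ (hua k x (hVU (hball hx))).differentiableAt]
    refine ⟨Fin.cons (-S y) c, ?_, ball y ε, fun z hz ↦ (hVU (hball hz)).1, isOpen_ball,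
      ⟨y, mem_ball_self hε⟩, fun z hz ↦ ?_⟩
    · intro h
      apply hc
      ext k
      simpa using congrFun h k.succ
    · have h2 := hconst z hz
      have h3 := (hVU (hball hz)).2
      rw [Fin.sum_univ_succ]
      simp only [Fin.cons_zero, Fin.cons_succ]
      rw [← h2]
      simp only [hS, neg_mul, Finset.sum_mul]
      rw [neg_add_eq_zero]
      refine Finset.sum_congr rfl fun k _ ↦ ?_
      simp only [hu]
      field_simp

/-- The derivatives of order at most `N` of a power `U ^ d` are divisible by `U ^ (d - N)`. -/
lemma exists_iteratedDeriv_pow_eq {U : ℂ → ℂ} {z₀ : ℂ} (hU : AnalyticAt ℂ U z₀) {d N : ℕ}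
    (hN : N ≤ d) {i : ℕ} (hi : i ≤ N) :
    ∃ q : ℂ → ℂ, AnalyticAt ℂ q z₀ ∧
      iteratedDeriv i (fun z ↦ U z ^ d) =ᶠ[𝓝 z₀] fun z ↦ U z ^ (d - N) * q z := by
  suffices h : ∃ q : ℂ → ℂ, AnalyticAt ℂ q z₀ ∧
      iteratedDeriv i (fun z ↦ U z ^ d) =ᶠ[𝓝 z₀] fun z ↦ U z ^ (d - i) * q z by
    obtain ⟨q, hq, h⟩ := h
    refine ⟨fun z ↦ U z ^ (N - i) * q z, (hU.fun_pow _).fun_mul hq, ?_⟩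
    filter_upwards [h] with z hz
    rw [hz, ← mul_assoc, ← pow_add]
    congr 2
    omega
  induction i with
  | zero => exact ⟨fun _ ↦ 1, analyticAt_const, by simp⟩
  | succ i ih =>
    obtain ⟨q, hq, h⟩ := ih (by omega)
    refine ⟨fun z ↦ (d - i : ℕ) * deriv U z * q z + U z * deriv q z, ?_, ?_⟩
    · exact ((analyticAt_const.fun_mul hU.deriv).fun_mul hq).fun_add (hU.fun_mul hq.deriv)
    · rw [iteratedDeriv_succ]
      refine h.deriv.trans ?_
      filter_upwards [hU.eventually_analyticAt, hq.eventually_analyticAt] with z hz hqz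
      rw [deriv_fun_mul (hz.differentiableAt.fun_pow _) hqz.differentiableAt,
        deriv_fun_pow hz.differentiableAt]
      have h1 : d - i = d - (i + 1) + 1 := by omega
      have h2 : d - i - 1 = d - (i + 1) := by omega
      rw [h2]
      generalize ((d - i : ℕ) : ℂ) = e
      rw [h1, pow_succ]
      ring

/-- The order of vanishing of the Wronskian of `d`-th powers. -/
lemma exists_wronskianDet_pow_eq {n d m : ℕ} (hd : n - 1 ≤ d) {G V : Fin n → ℂ → ℂ} {z₀ : ℂ}
    {e : Fin n → ℕ} (hV : ∀ k, AnalyticAt ℂ (V k) z₀)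
    (hGV : ∀ k, G k =ᶠ[𝓝 z₀] fun z ↦ (z - z₀) ^ (m + e k) * V k z) :
    ∃ Q : ℂ → ℂ, AnalyticAt ℂ Q z₀ ∧ wronskianDet (fun k z ↦ G k z ^ d) =ᶠ[𝓝 z₀]
      fun z ↦ (z - z₀) ^ (m * d * n + (d - (n - 1)) * ∑ k, e k) * Q z := by
  set U : Fin n → ℂ → ℂ := fun k z ↦ (z - z₀) ^ e k * V k z with hU
  have hUa : ∀ k, AnalyticAt ℂ (U k) z₀ := fun k ↦ by
    have : AnalyticAt ℂ (fun z ↦ (z - z₀) ^ e k) z₀ := by fun_prop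
    exact this.fun_mul (hV k)
  choose q hq hqU using fun (k : Fin n) (i : Fin n) ↦
    exists_iteratedDeriv_pow_eq (hUa k) hd (show (i : ℕ) ≤ n - 1 by omega)
  refine ⟨fun z ↦ (∏ k, V k z ^ (d - (n - 1))) * (Matrix.of fun k i ↦ q k i z).det, ?_, ?_⟩
  · refine (Finset.analyticAt_fun_prod _ fun k _ ↦ (hV k).fun_pow _).fun_mul ?_
    exact analyticAt_det fun k i ↦ hq k i
  · have h1 := fun k ↦ (hGV k).eventually_nhds
    have h2 := fun k ↦ (hUa k).eventually_analyticAt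
    filter_upwards [eventually_all.2 h1, eventually_all.2 h2,
      eventually_all.2 fun k ↦ eventually_all.2 (hqU k)] with z h1 h2 h3
    have h4 : wronskianDet (fun k z ↦ G k z ^ d) z =
        wronskianDet (fun k z ↦ (z - z₀) ^ (m * d) * U k z ^ d) z := by
      refine wronskianDet_congr fun k ↦ ?_
      filter_upwards [h1 k] with y hy
      rw [hy]
      simp only [hU]
      ring
    rw [h4, wronskianDet_mul (by fun_prop) fun k ↦ (h2 k).fun_pow d]
    have h5 : wronskianDet (fun k z ↦ U k z ^ d) z =
        (∏ k, U k z ^ (d - (n - 1))) * (Matrix.of fun k i ↦ q k i z).det := by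
      rw [← Matrix.det_mul_column]
      unfold wronskianDet
      congr 1
      ext k i
      exact h3 k i
    rw [h5]
    simp only [hU, mul_pow, Finset.prod_mul_distrib, ← pow_mul, Finset.prod_pow_eq_pow_sum,
      pow_add, ← Finset.sum_mul]
    ring

/-- If `n + 1` functions add up to zero, the Wronskians of the families obtained by omitting one
of them agree up to sign. -/
lemma exists_wronskianDet_eq_mul {n : ℕ} {F : Fin (n + 1) → ℂ → ℂ} (hF : ∀ k z, AnalyticAt ℂ (F k) z)
    (hsum : ∀ z, ∑ k, F k z = 0) (p q : Fin (n + 1)) :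
    ∃ ε : ℂ, ‖ε‖ = 1 ∧ ∀ z, wronskianDet (fun k ↦ F (q.succAbove k)) z =
      ε * wronskianDet (fun k ↦ F (p.succAbove k)) z := by
  refine ⟨(((q : ℤ) - p).negOnePow : ℤ), ?_, fun z ↦ ?_⟩
  · rcases Int.units_eq_one_or ((q : ℤ) - p).negOnePow with h4 | h4 <;> simp [h4]
  set M : Matrix (Fin (n + 1)) (Fin n) ℂ := Matrix.of fun k i ↦ iteratedDeriv i (F k) z with hM
  have h := Matrix.submatrix_succAbove_det_eq_negOnePow_submatrix_succAbove_det M (by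
    ext i
    have h1 : (fun z ↦ ∑ k, F k z) = fun _ ↦ (0 : ℂ) := by ext z; exact hsum z
    have h2 : iteratedDeriv i (fun z ↦ ∑ k, F k z) z = ∑ k, iteratedDeriv i (F k) z :=
      iteratedDeriv_fun_sum fun k _ ↦ (hF k z).contDiffAt
    rw [h1, iteratedDeriv_const] at h2
    have h3 : (∑ k, M k) i = ∑ k, M k i := Finset.sum_apply _ _ _
    rw [h3, Pi.zero_apply]
    simpa [hM] using h2.symm) q p
  have h3 : ∀ j : Fin (n + 1), wronskianDet (fun k ↦ F (j.succAbove k)) z =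
      (M.submatrix j.succAbove id).det := fun j ↦ rfl
  rw [h3, h3, h]
  rw [Units.smul_def, zsmul_eq_mul]

section Entire

variable {E : Type*} [NormedAddCommGroup E] [NormedSpace ℂ E] [CompleteSpace E] {f : ℂ → E}

lemma Differentiable.meromorphic (hf : Differentiable ℂ f) : Meromorphic f :=
  fun z ↦ (hf.analyticAt z).meromorphicAt

lemma Differentiable.meromorphicOrderAt_ne_top (hf : Differentiable ℂ f) (h0 : f ≠ 0) (z : ℂ) :
    meromorphicOrderAt f z ≠ ⊤ := by
  intro h
  rw [meromorphicOrderAt_eq_top_iff] at h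
  have h1 := (hf.analyticAt z).frequently_zero_iff_eventually_zero.1 h.frequently
  apply h0
  funext y
  exact AnalyticOnNhd.eqOn_zero_of_preconnected_of_eventuallyEq_zero
    (fun y _ ↦ hf.analyticAt y) isPreconnected_univ (mem_univ z) h1 (mem_univ y)

lemma Differentiable.exists_eventuallyEq_divisor (hf : Differentiable ℂ f) (h0 : f ≠ 0) (z₀ : ℂ) :
    ∃ (m : ℕ) (V : ℂ → E), AnalyticAt ℂ V z₀ ∧ V z₀ ≠ 0 ∧
      (∀ᶠ z in 𝓝 z₀, f z = (z - z₀) ^ m • V z) ∧ divisor f univ z₀ = m := by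
  have h1 := (hf.analyticAt z₀).exists_eventuallyEq_pow_smul_nonzero_iff.2 fun h ↦
    hf.meromorphicOrderAt_ne_top h0 z₀ <| meromorphicOrderAt_eq_top_iff.2 <|
      h.filter_mono nhdsWithin_le_nhds
  obtain ⟨m, V, hV, hV0, h⟩ := h1
  refine ⟨m, V, hV, hV0, h, ?_⟩
  have h2 : meromorphicOrderAt f z₀ = (m : ℤ) :=
    (meromorphicOrderAt_eq_int_iff (hf.analyticAt z₀).meromorphicAt).2
      ⟨V, hV, hV0, by simpa using h.filter_mono nhdsWithin_le_nhds⟩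
  rw [divisor_apply (fun z _ ↦ hf.meromorphic z) (mem_univ _), h2, WithTop.untop₀_coe]

lemma Differentiable.le_divisor (hf : Differentiable ℂ f) (h0 : f ≠ 0) {z₀ : ℂ} {N : ℕ}
    {Q : ℂ → E} (hQ : AnalyticAt ℂ Q z₀) (h : ∀ᶠ z in 𝓝 z₀, f z = (z - z₀) ^ N • Q z) :
    N ≤ divisor f univ z₀ := by
  have h1 := (natCast_le_analyticOrderAt (hf.analyticAt z₀)).2 ⟨Q, hQ, h⟩
  have h2 := hf.meromorphicOrderAt_ne_top h0 z₀
  rw [divisor_apply (fun z _ ↦ hf.meromorphic z) (mem_univ _)]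
  rw [(hf.analyticAt z₀).meromorphicOrderAt_eq] at h2 ⊢
  cases h3 : analyticOrderAt f z₀ with
  | top => simp [h3] at h2
  | coe m =>
    rw [h3] at h1
    simpa using h1

lemma Differentiable.divisor_nonneg (hf : Differentiable ℂ f) : 0 ≤ divisor f univ :=
  AnalyticOnNhd.divisor_nonneg fun z _ ↦ hf.analyticAt z

end Entire

lemma differentiable_wronskianDet {n : ℕ} {f : Fin n → ℂ → ℂ} (hf : ∀ k, Differentiable ℂ (f k)) :
    Differentiable ℂ (wronskianDet f) :=
  fun _ ↦ (analyticAt_wronskianDet fun k ↦ (hf k).analyticAt _).differentiableAt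

lemma sum_divisor_le_divisor_wronskianDet {n d : ℕ} (hn : 1 ≤ n) (hd : n - 1 ≤ d)
    {G : Fin (n + 1) → ℂ → ℂ} (hG : ∀ k, Differentiable ℂ (G k)) (hG0 : ∀ k, G k ≠ 0)
    (hsum : ∀ z, ∑ k, G k z ^ d = 0) (q : Fin (n + 1))
    (hW : wronskianDet (fun k z ↦ G (q.succAbove k) z ^ d) ≠ 0) (z₀ : ℂ) :
    (d - (n - 1) : ℤ) * ∑ k, divisor (G k) univ z₀ ≤
      divisor (wronskianDet fun k z ↦ G (q.succAbove k) z ^ d) univ z₀ +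
        (d - (n - 1) * (n + 1) : ℤ) * divisor (fun z k ↦ G k z) univ z₀ := by
  have hGd : Differentiable ℂ fun z k ↦ G k z := differentiable_pi.2 hG
  obtain ⟨m, U, hU, hU0, hGU, hm⟩ := hGd.exists_eventuallyEq_divisor
    (fun h ↦ hG0 0 <| funext fun z ↦ congrFun (congrFun h z) 0) z₀
  have hUk : ∀ k, AnalyticAt ℂ (fun z ↦ U z k) z₀ := fun k ↦ (analyticAt_pi_iff.1 hU) k
  have hGUk : ∀ k, ∀ᶠ z in 𝓝 z₀, G k z = (z - z₀) ^ m * U z k := fun k ↦ by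
    filter_upwards [hGU] with z hz
    simpa using congrFun hz k
  have hUne : ∀ k, ¬ ∀ᶠ z in 𝓝 z₀, U z k = 0 := by
    intro k h
    refine (hG k).meromorphicOrderAt_ne_top (hG0 k) z₀ (meromorphicOrderAt_eq_top_iff.2 ?_)
    refine Eventually.filter_mono nhdsWithin_le_nhds ?_
    filter_upwards [h, hGUk k] with z h1 h2
    rw [h2, h1, mul_zero]
  choose e V hV hV0 hUV using fun k ↦
    (hUk k).exists_eventuallyEq_pow_smul_nonzero_iff.2 (hUne k)
  have hGV : ∀ k, ∀ᶠ z in 𝓝 z₀, G k z = (z - z₀) ^ (m + e k) * V k z := fun k ↦ by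
    filter_upwards [hGUk k, hUV k] with z h1 h2
    rw [h1, h2, smul_eq_mul, pow_add]
    ring
  have hdiv : ∀ k, divisor (G k) univ z₀ = m + e k := by
    intro k
    have h2 : meromorphicOrderAt (G k) z₀ = ((m + e k : ℕ) : ℤ) :=
      (meromorphicOrderAt_eq_int_iff ((hG k).analyticAt z₀).meromorphicAt).2
        ⟨V k, hV k, hV0 k, by
          simpa only [zpow_natCast, smul_eq_mul] using (hGV k).filter_mono nhdsWithin_le_nhds⟩
    rw [divisor_apply (fun z _ ↦ (hG k).meromorphic z) (mem_univ _), h2, WithTop.untop₀_coe]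
    push_cast
    rfl
  obtain ⟨p, hp⟩ : ∃ p, U z₀ p ≠ 0 := by
    by_contra! h
    exact hU0 (funext h)
  have hep : e p = 0 := by
    by_contra h
    apply hp
    have := (hUV p).self_of_nhds
    rwa [sub_self, zero_pow h, zero_smul] at this
  obtain ⟨ε, -, hε⟩ := exists_wronskianDet_eq_mul (F := fun k z ↦ G k z ^ d)
    (fun k z ↦ ((hG k).analyticAt z).fun_pow d) hsum p q
  obtain ⟨Q, hQ, hWQ⟩ := exists_wronskianDet_pow_eq hd (fun k ↦ hV (p.succAbove k))
    fun k ↦ hGV (p.succAbove k)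
  have h3 := (differentiable_wronskianDet fun k ↦ (hG (q.succAbove k)).fun_pow d).le_divisor hW
    (N := m * d * n + (d - (n - 1)) * ∑ k, e (p.succAbove k))
    (analyticAt_const.fun_mul hQ : AnalyticAt ℂ (fun z ↦ ε * Q z) z₀) (by
      filter_upwards [hWQ] with z hz
      rw [hε, hz, smul_eq_mul]
      ring)
  have h4 : ∑ k, e k = ∑ k, e (p.succAbove k) := by
    rw [Fin.sum_univ_succAbove _ p, hep, zero_add]
  rw [← h4] at h3
  rw [hm]
  simp only [hdiv, Finset.sum_add_distrib, Finset.sum_const, Finset.card_univ, Fintype.card_fin,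
    nsmul_eq_mul]
  push_cast [Nat.cast_sub hd, Nat.cast_sub hn] at h3 ⊢
  linarith

/-- Jensen's formula for an entire function. -/
lemma exists_circleAverage_log_norm_eq {f : ℂ → ℂ} (hf : Differentiable ℂ f) :
    ∃ c, ∀ r, 1 ≤ r → circleAverage (fun z ↦ log ‖f z‖) 0 r = logCounting (divisor f univ) r + c :=
  ⟨log ‖meromorphicTrailingCoeffAt f 0‖, fun r hr ↦ by
    rw [logCounting_divisor_eq_circleAverage_sub_const hf.meromorphic (by linarith)]
    ring⟩

/-- The order function of a holomorphic curve, written in terms of a not necessarily reduced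
representation. -/
noncomputable def curveOrder {n : ℕ} (G : Fin n → ℂ → ℂ) (r : ℝ) : ℝ :=
  circleAverage (fun z ↦ log ‖fun k ↦ G k z‖) 0 r -
    logCounting (divisor (fun z k ↦ G k z) univ) r

/-- The characteristic of a quotient of two coordinates is at most the order of the curve. -/
lemma exists_characteristic_div_le_curveOrder {n : ℕ} {G : Fin n → ℂ → ℂ}
    (hG : ∀ k, Differentiable ℂ (G k)) (hG0 : ∀ k, G k ≠ 0) (k q : Fin n) :
    ∃ c, ∀ r, 1 ≤ r → (∀ z ∈ sphere (0 : ℂ) r, G q z ≠ 0) →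
      characteristic (G k / G q) ⊤ r ≤ curveOrder G r + c := by
  obtain ⟨c, hc⟩ := exists_circleAverage_log_norm_eq (hG q)
  refine ⟨-c, fun r hr hq ↦ ?_⟩
  have hGd : Differentiable ℂ fun z k ↦ G k z := differentiable_pi.2 hG
  have hGd0 : (fun z k ↦ G k z) ≠ 0 :=
    fun h ↦ hG0 q <| funext fun z ↦ congrFun (congrFun h z) q
  have hle : ∀ k, divisor (fun z k ↦ G k z) univ ≤ divisor (G k) univ := by
    intro k z
    obtain ⟨m, U, hU, hU0, hGU, hm⟩ := hGd.exists_eventuallyEq_divisor hGd0 z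
    rw [hm]
    refine (hG k).le_divisor (hG0 k) ((analyticAt_pi_iff.1 hU) k) ?_
    filter_upwards [hGU] with z hz
    simpa using congrFun hz k
  have hdiv : divisor (G k / G q) univ = divisor (G k) univ - divisor (G q) univ := by
    rw [div_eq_mul_inv, divisor_mul (fun z _ ↦ (hG k).meromorphic z)
      (fun z _ ↦ ((hG q).meromorphic z).inv) (fun z _ ↦ (hG k).meromorphicOrderAt_ne_top (hG0 k) z),
      divisor_inv, sub_eq_add_neg]
    intro z _
    rw [meromorphicOrderAt_inv]
    have := (hG q).meromorphicOrderAt_ne_top (hG0 q) z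
    cases h : meromorphicOrderAt (G q) z with
    | top => exact absurd h this
    | coe m => exact WithTop.coe_ne_top
  have h1 : logCounting (G k / G q) ⊤ r ≤ logCounting (divisor (G q) univ) r -
      logCounting (divisor (fun z k ↦ G k z) univ) r := by
    rw [logCounting_top, ← Pi.sub_apply, ← map_sub]
    refine logCounting_le (sup_le (fun z ↦ ?_) fun z ↦ ?_) hr
    · have h2 : divisor (fun z k ↦ G k z) univ z ≤ divisor (G k) univ z := hle k z
      simp only [hdiv, coe_sub, coe_neg, Pi.sub_apply, Pi.neg_apply]
      omega
    · have h3 : divisor (fun z k ↦ G k z) univ z ≤ divisor (G q) univ z := hle q z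
      simp only [coe_sub, coe_zero, Pi.sub_apply, Pi.zero_apply]
      omega
  have h2 : proximity (G k / G q) ⊤ r ≤ circleAverage (fun z ↦ log ‖fun k ↦ G k z‖) 0 r -
      circleAverage (fun z ↦ log ‖G q z‖) 0 r := by
    have i1 : CircleIntegrable (fun z ↦ log ‖fun k ↦ G k z‖) 0 r :=
      circleIntegrable_log_norm fun z _ ↦ hGd.meromorphic z
    have i2 : CircleIntegrable (fun z ↦ log ‖G q z‖) 0 r :=
      circleIntegrable_log_norm fun z _ ↦ (hG q).meromorphic z
    rw [proximity_top, ← circleAverage_fun_sub i1 i2]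
    refine circleAverage_mono ?_ (i1.sub i2) fun z hz ↦ ?_
    · exact circleIntegrable_posLog_norm fun z _ ↦
        ((hG k).meromorphic z).div ((hG q).meromorphic z)
    · rw [abs_of_pos (by linarith)] at hz
      have h3 := norm_pos_iff.2 (hq z hz)
      have h4 : ∀ k, ‖G k z‖ ≤ ‖fun k ↦ G k z‖ := fun k ↦ norm_le_pi_norm (fun k ↦ G k z) k
      rw [← log_div (h3.trans_le (h4 q)).ne' h3.ne', posLog_def]
      refine max_le (log_nonneg ((one_le_div h3).2 (h4 q))) ?_
      rw [Pi.div_apply, norm_div]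
      rcases eq_or_ne (G k z) 0 with h0 | h0
      · rw [h0]
        simpa using log_nonneg ((one_le_div h3).2 (h4 q))
      · have := norm_pos_iff.2 h0
        exact log_le_log (by positivity) (div_le_div_of_nonneg_right (h4 k) h3.le)
  have h3 := hc r hr
  simp only [characteristic, curveOrder, Pi.add_apply]
  linarith

/-- A form of Cartan's second main theorem for the curve `[G_0^d : … : G_n^d]`, where the error
term is bounded through an estimate for the Wronskian. -/
lemma exists_curveOrder_le {n d : ℕ} (hn : 1 ≤ n) (hd : n - 1 ≤ d)
    {G : Fin (n + 1) → ℂ → ℂ} (hG : ∀ k, Differentiable ℂ (G k)) (hG0 : ∀ k, G k ≠ 0)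
    (hsum : ∀ z, ∑ k, G k z ^ d = 0) (q : Fin (n + 1))
    (hW : wronskianDet (fun k z ↦ G (q.succAbove k) z ^ d) ≠ 0) :
    ∃ c, ∀ r B, 1 ≤ r → (∀ z ∈ sphere (0 : ℂ) r, ∀ k, G k z ≠ 0) →
      (∀ z ∈ sphere (0 : ℂ) r, wronskianDet (fun k z ↦ G (q.succAbove k) z ^ d) z ≠ 0) →
      (∀ z ∈ sphere (0 : ℂ) r, ∀ p : Fin (n + 1), ‖wronskianDet (fun k z ↦ G (q.succAbove k) z ^ d) z‖ ≤
        exp B * ∏ k, ‖G (p.succAbove k) z‖ ^ d) →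
      (d - (n - 1) * (n + 1) : ℝ) * curveOrder G r ≤ B + c := by
  set W := wronskianDet (fun k z ↦ G (q.succAbove k) z ^ d) with hWdef
  have hWd : Differentiable ℂ W :=
    differentiable_wronskianDet fun k ↦ (hG (q.succAbove k)).fun_pow d
  have hGd : Differentiable ℂ fun z k ↦ G k z := differentiable_pi.2 hG
  obtain ⟨cW, hcW⟩ := exists_circleAverage_log_norm_eq hWd
  choose c hc using fun k ↦ exists_circleAverage_log_norm_eq (hG k)
  refine ⟨-cW + (d - (n - 1)) * ∑ k, c k, fun r B hr hGr hWr hB ↦ ?_⟩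
  set x : Fin (n + 1) → ℝ := fun k ↦ circleAverage (fun z ↦ log ‖G k z‖) 0 r with hx
  set y := circleAverage (fun z ↦ log ‖fun k ↦ G k z‖) 0 r with hy
  have ik : ∀ k, CircleIntegrable (fun z ↦ log ‖G k z‖) 0 r := fun k ↦
    circleIntegrable_log_norm fun z _ ↦ (hG k).meromorphic z
  have iG : CircleIntegrable (fun z ↦ log ‖fun k ↦ G k z‖) 0 r :=
    circleIntegrable_log_norm fun z _ ↦ hGd.meromorphic z
  have iW : CircleIntegrable (fun z ↦ log ‖W z‖) 0 r :=
    circleIntegrable_log_norm fun z _ ↦ hWd.meromorphic z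
  have hr' : |r| = r := abs_of_pos (by linarith)
  have hnorm : ∀ z k, ‖G k z‖ ≤ ‖fun k ↦ G k z‖ := fun z k ↦ norm_le_pi_norm (fun k ↦ G k z) k
  have hxy : ∀ k, x k ≤ y := by
    intro k
    refine circleAverage_mono (ik k) iG fun z hz ↦ ?_
    rw [hr'] at hz
    exact log_le_log (norm_pos_iff.2 (hGr z hz k)) (hnorm z k)
  have h1 : circleAverage (fun z ↦ log ‖W z‖) 0 r ≤ d * ∑ k, x k - d * y + B := by
    have is : CircleIntegrable (fun z ↦ ∑ k, log ‖G k z‖) 0 r := by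
      have := CircleIntegrable.sum Finset.univ (fun k _ ↦ ik k)
      convert this using 1
      ext z
      simp
    have i1 : CircleIntegrable (fun z ↦ (d : ℝ) * ∑ k, log ‖G k z‖) 0 r := is.const_mul _
    have i2 : CircleIntegrable (fun z ↦ (d : ℝ) * log ‖fun k ↦ G k z‖) 0 r := iG.const_mul _
    have i12 : CircleIntegrable (fun z ↦ (d : ℝ) * ∑ k, log ‖G k z‖ -
        (d : ℝ) * log ‖fun k ↦ G k z‖) 0 r := i1.sub i2
    have i3 : CircleIntegrable (fun _ ↦ B) 0 r := circleIntegrable_const B 0 r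
    have h2 : circleAverage (fun z ↦ (d : ℝ) * ∑ k, log ‖G k z‖ -
        (d : ℝ) * log ‖fun k ↦ G k z‖ + B) 0 r = d * ∑ k, x k - d * y + B := by
      rw [circleAverage_fun_add i12 i3, circleAverage_fun_sub i1 i2, circleAverage_const]
      simp only [← smul_eq_mul]
      rw [circleAverage_fun_smul, circleAverage_fun_smul, circleAverage_fun_sum fun k _ ↦ ik k]
    rw [← h2]
    refine circleAverage_mono iW (i12.add i3) fun z hz ↦ ?_
    rw [hr'] at hz
    obtain ⟨p, hp⟩ := Finite.exists_max fun k ↦ ‖G k z‖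
    have h3 : ‖fun k ↦ G k z‖ = ‖G p z‖ :=
      le_antisymm ((pi_norm_le_iff_of_nonneg (norm_nonneg _)).2 hp) (hnorm z p)
    have h4 : ∀ k, ‖G k z‖ ≠ 0 := fun k ↦ norm_ne_zero_iff.2 (hGr z hz k)
    calc log ‖W z‖ ≤ log (exp B * ∏ k, ‖G (p.succAbove k) z‖ ^ d) :=
          log_le_log (norm_pos_iff.2 (hWr z hz)) (hB z hz p)
      _ = B + d * ∑ k, log ‖G (p.succAbove k) z‖ := by
          rw [log_mul (exp_pos B).ne' (Finset.prod_ne_zero_iff.2 fun k _ ↦ pow_ne_zero _ (h4 _)),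
            log_exp, log_prod fun k _ ↦ pow_ne_zero _ (h4 _), Finset.mul_sum]
          simp only [log_pow]
      _ = _ := by
          rw [h3, Fin.sum_univ_succAbove _ p]
          ring
  have h2 : (d - (n - 1) : ℝ) * ∑ k, logCounting (divisor (G k) univ) r ≤
      logCounting (divisor W univ) r +
        (d - (n - 1) * (n + 1) : ℝ) * logCounting (divisor (fun z k ↦ G k z) univ) r := by
    have h3 : ∀ a b : ℤ, a • ∑ k, divisor (G k) univ ≤ divisor W univ +
        b • divisor (fun z k ↦ G k z) univ → (a : ℝ) * ∑ k, logCounting (divisor (G k) univ) r ≤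
        logCounting (divisor W univ) r + b * logCounting (divisor (fun z k ↦ G k z) univ) r := by
      intro a b hab
      simpa only [map_add, map_zsmul, map_sum, Pi.add_apply, zsmul_eq_mul, Pi.mul_apply,
        Finset.sum_apply, Pi.intCast_apply] using logCounting_le hab hr
    have h4 := h3 (d - (n - 1)) (d - (n - 1) * (n + 1)) fun z ↦ by
      simpa using sum_divisor_le_divisor_wronskianDet hn hd hG hG0 hsum q hW z
    push_cast at h4
    exact h4
  have h3 : ∑ k, x k = ∑ k, logCounting (divisor (G k) univ) r + ∑ k, c k := by
    rw [← Finset.sum_add_distrib]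
    exact Finset.sum_congr rfl fun k _ ↦ hc k r hr
  have h4 : ∑ k, x k ≤ (n + 1) * y := by
    calc ∑ k, x k ≤ ∑ k : Fin (n + 1), y := Finset.sum_le_sum fun k _ ↦ hxy k
      _ = _ := by simp
  have h5 := hcW r hr
  have hn' : (0 : ℝ) ≤ n - 1 := by
    have : (1 : ℝ) ≤ n := by exact_mod_cast hn
    linarith
  have h6 := mul_le_mul_of_nonneg_left h4 hn'
  have h7 : ∑ k, logCounting (divisor (G k) univ) r = ∑ k, x k - ∑ k, c k := by linarith
  rw [h7] at h2
  simp only [curveOrder, ← hy]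
  nlinarith

/-- A quantitative continuity estimate for harmonic functions, from the Poisson integral formula. -/
lemma HarmonicOnNhd.sub_le {u : ℂ → ℝ} {R δ M : ℝ} (hR : 0 < R)
    (hu : InnerProductSpace.HarmonicOnNhd u (closedBall 0 R)) (hδ : 0 < δ)
    (hM : circleAverage |u| 0 R ≤ M) {w z : ℂ} (hw : ‖w‖ ≤ R - δ) (hz : ‖z‖ ≤ R - δ) :
    u w - u z ≤ 2 * R * ‖w - z‖ / δ ^ 2 * M := by
  have habs : |R| = R := abs_of_pos hR
  have hcont : ContinuousOn u (sphere 0 R) := fun x hx ↦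
    ((hu x (sphere_subset_closedBall hx)).1.continuousAt).continuousWithinAt
  have hsub : ∀ {w : ℂ}, ‖w‖ ≤ R - δ → ∀ {ζ : ℂ}, ζ ∈ sphere (0 : ℂ) R → δ ≤ ‖ζ - w‖ := by
    intro w hw ζ hζ
    rw [mem_sphere_zero_iff_norm] at hζ
    have := norm_sub_norm_le ζ w
    linarith
  have hne : ∀ {w : ℂ}, ‖w‖ ≤ R - δ → ∀ {ζ : ℂ}, ζ ∈ sphere (0 : ℂ) R → ζ - w ≠ 0 := by
    intro w hw ζ hζ
    exact norm_pos_iff.1 (hδ.trans_le (hsub hw hζ))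
  have hker : ∀ {w : ℂ}, ‖w‖ ≤ R - δ →
      CircleIntegrable (Complex.re ∘ herglotzRieszKernel 0 w • u) 0 R := by
    intro w hw
    refine ContinuousOn.circleIntegrable hR.le (ContinuousOn.smul ?_ hcont)
    refine Complex.continuous_re.comp_continuousOn ?_
    rw [herglotzRieszKernel_fun_def]
    refine ContinuousOn.div (by fun_prop) (by fun_prop) fun ζ hζ ↦ ?_
    simpa using hne hw hζ
  have hmem : ∀ {w : ℂ}, ‖w‖ ≤ R - δ → w ∈ ball (0 : ℂ) R := by
    intro w hw
    rw [mem_ball_zero_iff]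
    linarith
  have iu : CircleIntegrable |u| 0 R := (hcont.circleIntegrable hR.le).abs
  set C := 2 * R * ‖w - z‖ / δ ^ 2 with hC
  have hC0 : 0 ≤ C := by positivity
  rw [← hu.circleAverage_re_herglotzRieszKernel_smul (hmem hw),
    ← hu.circleAverage_re_herglotzRieszKernel_smul (hmem hz),
    ← circleAverage_sub (hker hw) (hker hz)]
  calc circleAverage _ 0 R ≤ circleAverage (C • |u|) 0 R := by
        refine circleAverage_mono ((hker hw).sub (hker hz)) (iu.const_mul C) fun ζ hζ ↦ ?_
        rw [habs] at hζ
        simp only [Pi.sub_apply, Pi.mul_apply, Function.comp_apply, Pi.smul_apply, Pi.abs_apply,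
          smul_eq_mul, herglotzRieszKernel_def, sub_zero]
        rw [← sub_mul, ← Complex.sub_re]
        refine (le_abs_self _).trans ?_
        rw [abs_mul]
        gcongr
        refine (Complex.abs_re_le_norm _).trans ?_
        have h1 : (ζ + w) / (ζ - w) - (ζ + z) / (ζ - z) =
            2 * ζ * (w - z) / ((ζ - w) * (ζ - z)) := by
          have := hne hw hζ
          have := hne hz hζ
          field_simp
          ring
        rw [h1, norm_div, norm_mul, norm_mul, norm_mul, Complex.norm_ofNat,
          mem_sphere_zero_iff_norm.1 hζ, hC, sq]
        have := hsub hw hζ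
        have := hsub hz hζ
        gcongr
    _ = C * circleAverage |u| 0 R := circleAverage_smul
    _ ≤ C * M := by gcongr

lemma circleAverage_abs_log_norm_sub_le {a : ℂ} {R : ℝ} (hR : 1 ≤ R) (ha : ‖a‖ ≤ R) :
    circleAverage (fun z ↦ |log ‖z - a‖|) 0 R ≤ 4 * R := by
  have hm : MeromorphicOn (fun z : ℂ ↦ z - a) (sphere 0 |R|) := fun z _ ↦ by fun_prop
  have habs : |R| = R := abs_of_pos (by linarith)
  have i1 : CircleIntegrable (fun z ↦ log ‖z - a‖) 0 R := hm.circleIntegrable_log_norm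
  have i2 : CircleIntegrable (fun _ ↦ 4 * R) 0 R := circleIntegrable_const _ 0 R
  calc circleAverage (fun z ↦ |log ‖z - a‖|) 0 R
      ≤ circleAverage (fun z ↦ 4 * R - log ‖z - a‖) 0 R := by
        refine circleAverage_mono i1.abs (i2.sub i1) fun z hz ↦ ?_
        rw [habs, mem_sphere_zero_iff_norm] at hz
        have h1 : log ‖z - a‖ ≤ 2 * R := by
          rcases (norm_nonneg (z - a)).eq_or_lt with h0 | h0
          · rw [← h0, log_zero]
            linarith
          · have := log_le_sub_one_of_pos h0
            have := norm_sub_le z a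
            linarith
        rw [abs_le]
        constructor <;> linarith
    _ = 4 * R - log R := by
        rw [circleAverage_fun_sub i2 i1, circleAverage_const,
          circleAverage_log_norm_sub_const_of_mem_closedBall (by simpa [habs] using ha)]
    _ ≤ 4 * R := by linarith [log_nonneg hR]

lemma abs_log_sub_log_le {x y s η : ℝ} (hs : 0 < s) (hy : s ≤ y) (hη : η ≤ s / 2)
    (hxy : |x - y| ≤ η) : |log x - log y| ≤ 2 * η / s := by
  obtain ⟨h1, h2⟩ := abs_le.1 hxy
  have hx : s / 2 ≤ x := by linarith
  have hx0 : 0 < x := by linarith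
  have hy0 : 0 < y := by linarith
  have h3 := log_le_sub_one_of_pos (div_pos hx0 hy0)
  have h4 := log_le_sub_one_of_pos (div_pos hy0 hx0)
  rw [log_div hx0.ne' hy0.ne'] at h3
  rw [log_div hy0.ne' hx0.ne'] at h4
  have h5 : x / y - 1 ≤ 2 * η / s := by
    rw [div_sub_one hy0.ne', div_le_div_iff₀ hy0 hs]
    nlinarith
  have h6 : y / x - 1 ≤ 2 * η / s := by
    rw [div_sub_one hx0.ne', div_le_div_iff₀ hx0 hs]
    nlinarith
  rw [abs_le]
  constructor <;> linarith

/-- On a closed disk, a meromorphic function is a finite product of linear factors times an analytic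
function without zeros, whose logarithm is controlled on the boundary circle. -/
lemma exists_prod_mul_analyticOnNhd {φ : ℂ → ℂ} {R : ℝ} (hR : 1 ≤ R)
    (hφ : MeromorphicOn φ (closedBall 0 R))
    (hφ' : ∀ z, meromorphicOrderAt φ z ≠ ⊤) {D : ℂ → ℤ} (hD : D = divisor φ (closedBall 0 R))
    {S : Finset ℂ} (hS : ∀ a, a ∈ S ↔ D a ≠ 0) :
    ∃ h : ℂ → ℂ, AnalyticOnNhd ℂ h (closedBall 0 R) ∧ (∀ z ∈ closedBall 0 R, h z ≠ 0) ∧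
      (∀ z ∈ ball (0 : ℂ) R, z ∉ S → AnalyticAt ℂ φ z →
        φ =ᶠ[𝓝 z] fun w ↦ (∏ a ∈ S, (w - a) ^ D a) * h w) ∧
      circleAverage |fun z ↦ log ‖h z‖| 0 R ≤
        circleAverage (fun z ↦ |log ‖φ z‖|) 0 R + 4 * R * ∑ a ∈ S, |(D a : ℝ)| := by
  have hfin : (divisor φ (closedBall 0 R)).support.Finite :=
    finiteSupport _ (isCompact_closedBall 0 R)
  obtain ⟨h, hh, hh0, heq⟩ := hφ.extract_zeros_poles (fun u ↦ hφ' u) hfin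
  rw [← hD] at heq
  have habs : |R| = R := abs_of_pos (by linarith)
  have hlog := MeromorphicOn.extract_zeros_poles_log hh0 (hD ▸ heq)
  rw [← hD] at hlog
  have hprod : (∏ᶠ u, (· - u) ^ D u : ℂ → ℂ) = fun w ↦ ∏ a ∈ S, (w - a) ^ D a := by
    rw [finprod_eq_prod_of_mulSupport_subset (s := S)]
    · ext w
      simp
    · intro u hu
      simp only [Finset.mem_coe, hS]
      intro h0
      simp [h0] at hu
  have hsum : (∑ᶠ u, (D u * log ‖· - u‖) : ℂ → ℝ) = fun w ↦ ∑ a ∈ S, D a * log ‖w - a‖ := by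
    rw [finsum_eq_sum_of_support_subset (s := S)]
    · ext w
      simp
    · intro u hu
      simp only [Finset.mem_coe, hS]
      intro h0
      apply hu
      ext w
      simp [h0]
  have hSmem : ∀ a ∈ S, a ∈ closedBall (0 : ℂ) R := by
    intro a ha
    refine (divisor φ (closedBall 0 R)).supportWithinDomain ?_
    rw [hS, hD] at ha
    exact ha
  refine ⟨h, hh, fun z hz ↦ hh0 ⟨z, hz⟩, ?_, ?_⟩
  · intro z hz hzS hφz
    rw [hprod] at heq
    have han : AnalyticAt ℂ (fun w ↦ (∏ a ∈ S, (w - a) ^ D a) * h w) z := by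
      refine AnalyticAt.mul (Finset.analyticAt_fun_prod _ fun a ha ↦ ?_)
        (hh z (ball_subset_closedBall hz))
      refine AnalyticAt.fun_zpow (by fun_prop) ?_
      rw [sub_ne_zero]
      rintro rfl
      exact hzS ha
    refine (hφz.frequently_eq_iff_eventually_eq han).1 (Eventually.frequently ?_)
    have h1 := mem_codiscreteWithin_iff_forall_mem_nhdsNE.1 heq z (ball_subset_closedBall hz)
    have h2 : ball (0 : ℂ) R ∈ 𝓝[≠] z := mem_nhdsWithin_of_mem_nhds (isOpen_ball.mem_nhds hz)
    filter_upwards [h1, h2] with w hw1 hw2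
    rcases hw1 with hw1 | hw1
    · exact hw1
    · exact absurd (ball_subset_closedBall hw2) hw1
  · have i1 : CircleIntegrable (fun z ↦ log ‖φ z‖) 0 R :=
      MeromorphicOn.circleIntegrable_log_norm fun z hz ↦ hφ z (by
        rw [habs] at hz; exact sphere_subset_closedBall hz)
    have i2 : ∀ a ∈ S, CircleIntegrable (fun z ↦ |(D a : ℝ)| * |log ‖z - a‖|) 0 R := fun a _ ↦ by
      have : MeromorphicOn (fun z : ℂ ↦ z - a) (sphere 0 |R|) := fun z _ ↦ by fun_prop
      exact this.circleIntegrable_log_norm.abs.const_mul _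
    have i3 : CircleIntegrable (fun z ↦ ∑ a ∈ S, |(D a : ℝ)| * |log ‖z - a‖|) 0 R :=
      CircleIntegrable.fun_sum S i2
    set T : ℂ → ℝ := fun z ↦ ∑ a ∈ S, D a * log ‖z - a‖ with hT
    have hc : |fun z ↦ log ‖h z‖| =ᶠ[codiscreteWithin (sphere 0 |R|)]
        fun z ↦ |log ‖φ z‖ - T z| := by
      rw [habs]
      have := hlog.filter_mono (codiscreteWithin_mono (sphere_subset_closedBall (x := (0 : ℂ))))
      rw [hsum] at this
      filter_upwards [this] with z hz
      simp only [Pi.abs_apply]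
      rw [hz]
      simp [hT]
    have iT : CircleIntegrable T 0 R := by
      refine CircleIntegrable.fun_sum S fun a _ ↦ ?_
      have : MeromorphicOn (fun z : ℂ ↦ z - a) (sphere 0 |R|) := fun z _ ↦ by fun_prop
      exact this.circleIntegrable_log_norm.const_mul _
    rw [circleAverage_congr_codiscreteWithin hc (by linarith)]
    calc circleAverage (fun z ↦ |log ‖φ z‖ - T z|) 0 R
        ≤ circleAverage (fun z ↦ |log ‖φ z‖| + ∑ a ∈ S, |(D a : ℝ)| * |log ‖z - a‖|) 0 R := by
          refine circleAverage_mono (i1.sub iT).abs (i1.abs.add i3) fun z _ ↦ ?_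
          refine (abs_sub _ _).trans ?_
          gcongr
          refine (Finset.abs_sum_le_sum_abs _ _).trans (le_of_eq ?_)
          simp [abs_mul]
      _ = circleAverage (fun z ↦ |log ‖φ z‖|) 0 R +
            ∑ a ∈ S, |(D a : ℝ)| * circleAverage (fun z ↦ |log ‖z - a‖|) 0 R := by
          rw [circleAverage_fun_add (c := 0) (f₁ := fun z ↦ |log ‖φ z‖|) i1.abs i3,
            circleAverage_fun_sum i2]
          congr 1
          refine Finset.sum_congr rfl fun a _ ↦ ?_
          exact circleAverage_smul (a := |(D a : ℝ)|) (f := fun z ↦ |log ‖z - a‖|)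
      _ ≤ _ := by
          rw [Finset.mul_sum]
          refine add_le_add le_rfl (Finset.sum_le_sum fun a ha ↦ ?_)
          rw [mul_comm]
          refine mul_le_mul_of_nonneg_right ?_ (abs_nonneg _)
          exact circleAverage_abs_log_norm_sub_le hR (by simpa using hSmem a ha)

/-- Cauchy estimates for powers of a meromorphic function at a point that is far from all zeros and
poles. -/
lemma norm_iteratedDeriv_pow_le {φ : ℂ → ℂ} {R : ℝ} (hR : 1 ≤ R)
    (hφ : MeromorphicOn φ (closedBall 0 R))
    (hφ' : ∀ z, meromorphicOrderAt φ z ≠ ⊤) {D : ℂ → ℤ} (hD : D = divisor φ (closedBall 0 R))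
    {S : Finset ℂ} (hS : ∀ a, a ∈ S ↔ D a ≠ 0) {z : ℂ} {δ s η N L : ℝ}
    (hN : ∑ a ∈ S, |(D a : ℝ)| ≤ N) (hL : circleAverage (fun z ↦ |log ‖φ z‖|) 0 R ≤ L)
    (hδ : 0 < δ) (hz : ‖z‖ + 2 * δ ≤ R) (hφz : AnalyticAt ℂ φ z) (hs : 0 < s)
    (hsz : ∀ a ∈ S, s ≤ ‖z - a‖) (hη : 0 < η) (hηδ : η ≤ δ) (hηs : η ≤ s / 2)
    (hsmall : 2 * N * η / s + 2 * R * η / δ ^ 2 * (L + 4 * R * N) ≤ 1) (i d : ℕ) :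
    ‖iteratedDeriv i (fun w ↦ φ w ^ d) z‖ ≤ i.factorial * (exp d * ‖φ z‖ ^ d) / η ^ i := by
  obtain ⟨h, hh, hh0, heq, havg⟩ := exists_prod_mul_analyticOnNhd hR hφ hφ' hD hS
  have hzR : z ∈ ball (0 : ℂ) R := by
    rw [mem_ball_zero_iff]
    linarith
  have hsub : closedBall z η ⊆ closedBall 0 R := by
    refine closedBall_subset_closedBall' ?_
    rw [dist_zero_right]
    linarith
  have hne : ∀ w ∈ closedBall z η, ∀ a ∈ S, w - a ≠ 0 := by
    intro w hw a ha h0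
    rw [sub_eq_zero] at h0
    subst h0
    have := hsz w ha
    rw [mem_closedBall, dist_comm, dist_eq_norm] at hw
    linarith
  have hzS : z ∉ S := fun hzS ↦ hne z (mem_closedBall_self hη.le) z hzS (sub_self z)
  have heqz := heq z hzR hzS hφz
  set ψ : ℂ → ℂ := fun w ↦ (∏ a ∈ S, (w - a) ^ D a) * h w with hψ
  have hψan : ∀ w ∈ closedBall z η, AnalyticAt ℂ ψ w := by
    intro w hw
    refine AnalyticAt.mul (Finset.analyticAt_fun_prod _ fun a ha ↦ ?_) (hh w (hsub hw))
    exact AnalyticAt.fun_zpow (by fun_prop) (hne w hw a ha)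
  have hψ0 : ∀ w ∈ closedBall z η, ψ w ≠ 0 := fun w hw ↦
    mul_ne_zero (Finset.prod_ne_zero_iff.2 fun a ha ↦ zpow_ne_zero _ (hne w hw a ha))
      (hh0 w (hsub hw))
  have hψlog : ∀ w ∈ closedBall z η,
      log ‖ψ w‖ = ∑ a ∈ S, D a * log ‖w - a‖ + log ‖h w‖ := by
    intro w hw
    simp only [hψ, norm_mul, norm_prod, norm_zpow]
    rw [log_mul, log_prod]
    · simp [log_zpow]
    · exact fun a ha ↦ zpow_ne_zero _ (norm_ne_zero_iff.2 (hne w hw a ha))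
    · exact Finset.prod_ne_zero_iff.2 fun a ha ↦
        zpow_ne_zero _ (norm_ne_zero_iff.2 (hne w hw a ha))
    · exact norm_ne_zero_iff.2 (hh0 w (hsub hw))
  have hmain : ∀ w ∈ closedBall z η, log ‖ψ w‖ - log ‖ψ z‖ ≤ 1 := by
    intro w hw
    have hwz : ‖w - z‖ ≤ η := by rwa [mem_closedBall, dist_eq_norm] at hw
    rw [hψlog w hw, hψlog z (mem_closedBall_self hη.le)]
    have h1 : ∑ a ∈ S, D a * log ‖w - a‖ - ∑ a ∈ S, D a * log ‖z - a‖ ≤ N * (2 * η / s) := by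
      rw [← Finset.sum_sub_distrib]
      calc _ ≤ ∑ a ∈ S, |(D a : ℝ)| * (2 * η / s) := by
            refine Finset.sum_le_sum fun a ha ↦ ?_
            rw [← mul_sub]
            refine (le_abs_self _).trans ?_
            rw [abs_mul]
            gcongr
            refine abs_log_sub_log_le hs (hsz a ha) hηs ?_
            refine (abs_norm_sub_norm_le _ _).trans ?_
            rwa [sub_sub_sub_cancel_right]
        _ ≤ N * (2 * η / s) := by
            rw [← Finset.sum_mul]
            gcongr
    have hN0 : 0 ≤ N := (Finset.sum_nonneg fun a _ ↦ abs_nonneg _).trans hN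
    have hM : circleAverage |fun z ↦ log ‖h z‖| 0 R ≤ L + 4 * R * N := by
      refine havg.trans ?_
      gcongr
    have hM0 : 0 ≤ L + 4 * R * N := by
      refine le_trans ?_ hM
      exact circleAverage_nonneg_of_nonneg fun x _ ↦ abs_nonneg _
    have hwn : ‖w‖ ≤ R - δ := by
      have := norm_add_le z (w - z)
      rw [add_sub_cancel] at this
      linarith
    have h2 := HarmonicOnNhd.sub_le (u := fun z ↦ log ‖h z‖) (by linarith)
      (fun x hx ↦ (hh x hx).harmonicAt_log_norm (hh0 x hx)) hδ hM hwn
      (show ‖z‖ ≤ R - δ by linarith)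
    have h3 : 2 * R * ‖w - z‖ / δ ^ 2 * (L + 4 * R * N) ≤
        2 * R * η / δ ^ 2 * (L + 4 * R * N) := by gcongr
    have h4 : N * (2 * η / s) = 2 * N * η / s := by ring
    linarith
  have hbound : ∀ w ∈ closedBall z η, ‖ψ w‖ ≤ exp 1 * ‖ψ z‖ := by
    intro w hw
    have h1 := norm_pos_iff.2 (hψ0 w hw)
    have h2 := norm_pos_iff.2 (hψ0 z (mem_closedBall_self hη.le))
    rw [← exp_log h2, ← exp_add, ← log_le_iff_le_exp h1]
    linarith [hmain w hw]
  have hzeq : φ z = ψ z := heqz.self_of_nhds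
  have hpow : (fun w ↦ φ w ^ d) =ᶠ[𝓝 z] fun w ↦ ψ w ^ d := heqz.fun_comp (· ^ d)
  rw [hpow.iteratedDeriv_eq, hzeq]
  refine Complex.norm_iteratedDeriv_le_of_forall_mem_sphere_norm_le i hη ?_ fun w hw ↦ ?_
  · refine DifferentiableOn.diffContOnCl fun w hw ↦ ?_
    rw [closure_ball z hη.ne'] at hw
    exact ((hψan w hw).pow d).differentiableAt.differentiableWithinAt
  · rw [norm_pow, ← mul_one (d : ℝ), exp_nat_mul, ← mul_pow]
    gcongr
    exact hbound w (sphere_subset_closedBall hw)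

/-- The first main theorem bounds both the mean of `|log ‖φ‖|` and the number of zeros and poles of
`φ` through the characteristic of `φ`. -/
lemma exists_circleAverage_abs_log_le {φ : ℂ → ℂ} (hφ : Meromorphic φ) :
    ∃ c, 1 ≤ c ∧ ∀ ρ R, 1 ≤ ρ → ρ ≤ R →
      circleAverage (fun z ↦ |log ‖φ z‖|) 0 ρ ≤ c * (1 + characteristic φ ⊤ R) ∧
      ∀ S : Finset ℂ, (∀ a ∈ S, ‖a‖ ≤ ρ) →
        (∑ a ∈ S, |(divisor φ univ a : ℝ)|) * log (R / ρ) ≤ c * (1 + characteristic φ ⊤ R) := by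
  set M := max |log ‖φ 0‖| |log ‖meromorphicTrailingCoeffAt φ 0‖| with hM
  have hM0 : 0 ≤ M := le_max_of_le_left (abs_nonneg _)
  have hinv : ∀ r, characteristic φ⁻¹ ⊤ r ≤ characteristic φ ⊤ r + M := by
    intro r
    have := (abs_le.1 (characteristic_sub_characteristic_inv_le hφ (R := r))).1
    linarith
  refine ⟨2 + M, by linarith, fun ρ R hρ hR ↦ ?_⟩
  have hR1 : 1 ≤ R := hρ.trans hR
  have hmono : ∀ {f : ℂ → ℂ}, Meromorphic f → characteristic f ⊤ ρ ≤ characteristic f ⊤ R :=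
    fun hf ↦ characteristic_monotoneOn hf (show 0 < ρ by linarith) (show 0 < R by linarith) hR
  have hT0 : 0 ≤ characteristic φ ⊤ R := characteristic_nonneg hR1
  have hfin : 2 * characteristic φ ⊤ R + M ≤ (2 + M) * (1 + characteristic φ ⊤ R) := by nlinarith
  constructor
  · have i1 : CircleIntegrable (fun z ↦ log⁺ ‖φ z‖) 0 ρ :=
      MeromorphicOn.circleIntegrable_posLog_norm fun z _ ↦ hφ z
    have i2 : CircleIntegrable (fun z ↦ log⁺ ‖φ⁻¹ z‖) 0 ρ :=
      MeromorphicOn.circleIntegrable_posLog_norm fun z _ ↦ hφ.inv z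
    have heq : (fun z ↦ |log ‖φ z‖|) = fun z ↦ log⁺ ‖φ z‖ + log⁺ ‖φ⁻¹ z‖ := by
      ext z
      simp only [Pi.inv_apply, norm_inv, posLog_def, Pi.sup_apply, Pi.zero_apply, log_inv]
      rcases le_total 0 (log ‖φ z‖) with h | h
      · rw [abs_of_nonneg h, max_eq_right h, max_eq_left (by linarith), add_zero]
      · rw [abs_of_nonpos h, max_eq_left h, max_eq_right (by linarith), zero_add]
    rw [heq, circleAverage_fun_add i1 i2]
    have h1 : circleAverage (fun z ↦ log⁺ ‖φ z‖) 0 ρ ≤ characteristic φ ⊤ ρ := by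
      simp only [characteristic, proximity_top, Pi.add_apply]
      exact le_add_of_nonneg_right (logCounting_nonneg hρ)
    have h2 : circleAverage (fun z ↦ log⁺ ‖φ⁻¹ z‖) 0 ρ ≤ characteristic φ⁻¹ ⊤ ρ := by
      simp only [characteristic, proximity_top, Pi.add_apply]
      exact le_add_of_nonneg_right (logCounting_nonneg hρ)
    linarith [hmono hφ, hmono hφ.inv, hinv R]
  · intro S hS
    have h1 := sum_mul_log_le_logCounting (posPart_nonneg (divisor φ univ)) S hS hρ hR
    have h2 := sum_mul_log_le_logCounting (negPart_nonneg (divisor φ univ)) S hS hρ hR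
    have h3 : ∑ a ∈ S, |(divisor φ univ a : ℝ)| =
        ∑ a ∈ S, (((divisor φ univ)⁺ a : ℤ) : ℝ) + ∑ a ∈ S, (((divisor φ univ)⁻ a : ℤ) : ℝ) := by
      rw [← Finset.sum_add_distrib]
      refine Finset.sum_congr rfl fun a _ ↦ ?_
      rw [posPart_apply, negPart_apply]
      exact_mod_cast (posPart_add_negPart (divisor φ univ a)).symm
    rw [← logCounting_zero] at h1
    rw [← logCounting_top] at h2
    rw [← logCounting_inv] at h1
    have h4 : logCounting φ⁻¹ ⊤ R ≤ characteristic φ⁻¹ ⊤ R := by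
      simp only [characteristic, Pi.add_apply]
      exact le_add_of_nonneg_left (proximity_nonneg _)
    have h5 : logCounting φ ⊤ R ≤ characteristic φ ⊤ R := by
      simp only [characteristic, Pi.add_apply]
      exact le_add_of_nonneg_left (proximity_nonneg _)
    rw [h3, add_mul]
    linarith [hinv R]

/-- An interval contains a point that avoids a finite set and keeps a definite distance from
another one. -/
lemma exists_mem_Icc_le_abs_sub (r : ℝ) {Δ : ℝ} (hΔ : 0 < Δ) (M : Finset ℝ) {Z : Set ℝ}
    (hZ : Z.Finite) :
    ∃ x ∈ Icc r (r + Δ), x ∉ Z ∧ ∀ m ∈ M, Δ / (4 * (M.card + 1)) ≤ |x - m| := by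
  by_contra! hcon
  set s := Δ / (4 * (M.card + 1)) with hs
  have hs0 : 0 < s := by positivity
  have hsub : Icc r (r + Δ) ⊆ Z ∪ ⋃ m ∈ M, ball m s := by
    intro x hx
    by_cases hxZ : x ∈ Z
    · exact Or.inl hxZ
    · obtain ⟨m, hm, hlt⟩ := hcon x hx hxZ
      exact Or.inr (mem_biUnion hm (by rwa [mem_ball, Real.dist_eq]))
  have h1 : ENNReal.ofReal Δ ≤ ENNReal.ofReal (M.card * (2 * s)) := by
    calc ENNReal.ofReal Δ = MeasureTheory.volume (Icc r (r + Δ)) := by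
          rw [Real.volume_Icc, add_sub_cancel_left]
      _ ≤ MeasureTheory.volume (Z ∪ ⋃ m ∈ M, ball m s) := MeasureTheory.measure_mono hsub
      _ ≤ MeasureTheory.volume Z + MeasureTheory.volume (⋃ m ∈ M, ball m s) :=
          MeasureTheory.measure_union_le _ _
      _ ≤ 0 + ∑ m ∈ M, MeasureTheory.volume (ball m s) := by
          gcongr
          · exact (hZ.measure_zero _).le
          · exact MeasureTheory.measure_biUnion_finset_le _ _
      _ = ENNReal.ofReal (M.card * (2 * s)) := by
          simp only [Real.volume_ball, Finset.sum_const, zero_add, nsmul_eq_mul]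
          rw [ENNReal.ofReal_mul (p := (M.card : ℝ)) (by positivity), ENNReal.ofReal_natCast]
  rw [ENNReal.ofReal_le_ofReal_iff (by positivity), hs] at h1
  have h2 : (M.card : ℝ) * (2 * (Δ / (4 * (M.card + 1)))) =
      Δ * (2 * M.card / (4 * (M.card + 1))) := by ring
  have h3 : (2 * M.card / (4 * (M.card + 1)) : ℝ) < 1 := by
    rw [div_lt_one (by positivity)]
    linarith [(Nat.cast_nonneg M.card : (0 : ℝ) ≤ M.card)]
  nlinarith

lemma cauchyRadius_le {m Y Δ R L : ℝ} (hm : 0 ≤ m) (hY : 1 ≤ Y) (hΔ : 0 < Δ) (hR : 0 ≤ R)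
    (hRY : R ≤ Y * Δ) (hYΔ : 1 ≤ Y * Δ) (hL0 : 0 ≤ L) (hL : L ≤ Y) :
    1 / (2000 * (m + 1) * Y ^ 3) ≤ Δ / 8 ∧
      1 / (2000 * (m + 1) * Y ^ 3) ≤ Δ / (64 * (m + 1) * Y) / 2 ∧
      2 * (2 * Y) * (1 / (2000 * (m + 1) * Y ^ 3)) / (Δ / (64 * (m + 1) * Y)) +
        2 * R * (1 / (2000 * (m + 1) * Y ^ 3)) / (Δ / 8) ^ 2 * (L + 4 * R * (2 * Y)) ≤ 1 := by
  have hY0 : 0 < Y := by linarith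
  have hm1 : 0 < m + 1 := by linarith
  have hY3 : Y ≤ Y ^ 3 := le_self_pow₀ hY (by norm_num)
  refine ⟨?_, ?_, ?_⟩
  · rw [div_le_div_iff₀ (by positivity) (by norm_num)]
    have h1 : 1 ≤ Δ * Y ^ 3 := by nlinarith
    nlinarith
  · rw [div_div, div_le_div_iff₀ (by positivity) (by positivity)]
    have h1 : (m + 1) * Y * 1 ≤ (m + 1) * Y * (Y * Δ * Y) := by
      gcongr
      nlinarith
    nlinarith
  · have h1 : 2 * (2 * Y) * (1 / (2000 * (m + 1) * Y ^ 3)) / (Δ / (64 * (m + 1) * Y)) =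
        256 / 2000 / (Y * Δ) := by
      field_simp
      norm_num
    have h2 : 256 / 2000 / (Y * Δ) ≤ 256 / 2000 := div_le_self (by norm_num) hYΔ
    have h3 : L + 4 * R * (2 * Y) ≤ 9 * (Y ^ 2 * Δ) := by
      have : R * Y ≤ Y * Δ * Y := by gcongr
      nlinarith
    have h4 : 2 * R * (1 / (2000 * (m + 1) * Y ^ 3)) / (Δ / 8) ^ 2 * (L + 4 * R * (2 * Y)) ≤
        2 * (Y * Δ) * (1 / (2000 * (m + 1) * Y ^ 3)) / (Δ / 8) ^ 2 * (9 * (Y ^ 2 * Δ)) := by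
      gcongr
    have h5 : 2 * (Y * Δ) * (1 / (2000 * (m + 1) * Y ^ 3)) / (Δ / 8) ^ 2 * (9 * (Y ^ 2 * Δ)) =
        1152 / 2000 / (m + 1) := by
      field_simp
      norm_num
    have h6 : 1152 / 2000 / (m + 1) ≤ 1152 / 2000 := div_le_self (by norm_num) (by linarith)
    linarith

lemma log_cauchyConstant_le (n d : ℕ) {A c σ R Δ : ℝ} (hA : 1 ≤ A) (hc : 1 ≤ c) (hσ : 0 ≤ σ)
    (hR : 1 ≤ R) (hΔ : 0 < Δ) (hΔ1 : Δ ≤ 1) :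
    log (n.factorial * exp d / (1 / (A * (c * (1 + σ) * (R * (1 / Δ))) ^ 3)) ^ n) ≤
      (log n.factorial + d + n * (log A + 3 * log c + 3 * log 2) + 3 * n) *
        (1 + log⁺ σ + log (1 / Δ) + log R) := by
  have hn : (0 : ℝ) < n.factorial := by exact_mod_cast n.factorial_pos
  have hlogY : log (c * (1 + σ) * (R * (1 / Δ))) =
      log c + log (1 + σ) + (log R + log (1 / Δ)) := by
    rw [log_mul (by positivity) (by positivity), log_mul (by positivity) (by positivity),
      log_mul (by positivity) (by positivity)]
  have hlogσ : log (1 + σ) ≤ log 2 + log⁺ σ := by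
    rcases le_total σ 1 with h | h
    · have := log_le_log (show 0 < 1 + σ by positivity) (show 1 + σ ≤ 2 by linarith)
      linarith [posLog_nonneg (x := σ)]
    · have h1 := log_le_log (show 0 < 1 + σ by positivity) (show 1 + σ ≤ 2 * σ by linarith)
      rw [log_mul (by norm_num) (by positivity)] at h1
      have h2 : log σ ≤ log⁺ σ := le_max_right _ _
      linarith
  rw [log_div (by positivity) (by positivity), log_mul (by positivity) (by positivity), log_exp,
    log_pow, one_div (A * _), log_inv, log_mul (by positivity) (by positivity), log_pow, hlogY]
  have hlf : 0 ≤ log (n.factorial : ℝ) := log_nonneg (by exact_mod_cast n.factorial_pos)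
  have hlA := log_nonneg hA
  have hlc := log_nonneg hc
  have hl2 := log_nonneg (one_le_two (α := ℝ))
  have hp := posLog_nonneg (x := σ)
  have hlR := log_nonneg hR
  have hlΔ := log_nonneg ((one_le_div hΔ).2 hΔ1)
  have h1 : (n : ℝ) * log (1 + σ) ≤ n * (log 2 + log⁺ σ) := by gcongr
  have h2 : 0 ≤ (log n.factorial + d + n * (log A + 3 * log c + 3 * log 2)) *
      (log⁺ σ + log (1 / Δ) + log R) := by positivity
  push_cast
  nlinarith

/-- A pointwise form of the lemma on the logarithmic derivative for powers of meromorphic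
functions, valid on a circle whose radius lies in a prescribed interval. -/
lemma exists_norm_iteratedDeriv_pow_le {ι : Type*} [Fintype ι] {φ : ι → ℂ → ℂ}
    (hφ : ∀ k, Meromorphic (φ k)) (hφ' : ∀ k z, meromorphicOrderAt (φ k) z ≠ ⊤) {Z : Set ℂ}
    (hZ : ∀ ρ, (Z ∩ closedBall 0 ρ).Finite) (n d : ℕ) :
    ∃ C, 0 ≤ C ∧ ∀ r R, 1 ≤ r → r < R → R ≤ r + 1 → ∃ ρ ∈ Icc r R,
      (∀ z ∈ sphere (0 : ℂ) ρ, z ∉ Z) ∧ ∃ B,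
      B ≤ C * (1 + log⁺ (∑ k, characteristic (φ k) ⊤ R) + log (1 / (R - r)) + log R) ∧
      ∀ z ∈ sphere (0 : ℂ) ρ, ∀ k, AnalyticAt ℂ (φ k) z → ∀ i ≤ n,
        ‖iteratedDeriv i (fun w ↦ φ k w ^ d) z‖ ≤ exp B * ‖φ k z‖ ^ d := by
  classical
  choose c hc1 hc using fun k ↦ exists_circleAverage_abs_log_le (hφ k)
  set c' : ℝ := 1 + ∑ k, c k with hc'
  have hck : ∀ k, c k ≤ c' := by
    intro k
    have := Finset.single_le_sum (f := c) (fun j _ ↦ zero_le_one.trans (hc1 j))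
      (Finset.mem_univ k)
    linarith
  have hc'1 : 1 ≤ c' := by
    have := Finset.sum_nonneg (s := Finset.univ) fun (j : ι) _ ↦ zero_le_one.trans (hc1 j)
    linarith
  set m : ℝ := (Fintype.card ι : ℝ) with hm
  have hm0 : 0 ≤ m := Nat.cast_nonneg _
  set A : ℝ := 2000 * (m + 1) with hA
  have hA1 : 1 ≤ A := by linarith
  have hn1 : (1 : ℝ) ≤ n.factorial := by exact_mod_cast n.factorial_pos
  set C₀ : ℝ := log n.factorial + d + n * (log A + 3 * log c' + 3 * log 2) with hC₀
  have hC₀0 : 0 ≤ C₀ := by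
    have := log_nonneg hn1
    have := log_nonneg hA1
    have := log_nonneg hc'1
    have := log_nonneg (one_le_two (α := ℝ))
    positivity
  refine ⟨C₀ + 3 * n, by positivity, fun r R hr hrR hR ↦ ?_⟩
  set Δ := R - r with hΔ
  have hΔ0 : 0 < Δ := sub_pos.2 hrR
  have hΔ1 : Δ ≤ 1 := by linarith
  have hR1 : 1 ≤ R := by linarith
  set σ := ∑ k, characteristic (φ k) ⊤ R with hσ
  have hT0 : ∀ k, 0 ≤ characteristic (φ k) ⊤ R := fun k ↦ characteristic_nonneg hR1
  have hσk : ∀ k, characteristic (φ k) ⊤ R ≤ σ := fun k ↦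
    Finset.single_le_sum (f := fun k ↦ characteristic (φ k) ⊤ R) (fun j _ ↦ hT0 j)
      (Finset.mem_univ k)
  have hσ0 : 0 ≤ σ := Finset.sum_nonneg fun k _ ↦ hT0 k
  set Y : ℝ := c' * (1 + σ) * (R * (1 / Δ)) with hY
  have hcX : 1 ≤ c' * (1 + σ) := one_le_mul_of_one_le_of_one_le hc'1 (by linarith)
  have hΔinv : 1 ≤ 1 / Δ := (one_le_div hΔ0).2 hΔ1
  have hRΔ : 1 ≤ R * (1 / Δ) := one_le_mul_of_one_le_of_one_le hR1 hΔinv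
  have hY1 : 1 ≤ Y := one_le_mul_of_one_le_of_one_le hcX hRΔ
  have hYΔ' : Y * Δ = c' * (1 + σ) * R := by
    rw [hY]
    field_simp
  have hRY : R ≤ Y * Δ := by
    rw [hYΔ']
    exact le_mul_of_one_le_left (by linarith) hcX
  have hYΔ : 1 ≤ Y * Δ := hR1.trans hRY
  have hL : c' * (1 + σ) ≤ Y := le_mul_of_one_le_right (by linarith) hRΔ
  set R₁ := r + Δ / 2 with hR₁
  have hR₁1 : 1 ≤ R₁ := by linarith
  have hR₁R : R₁ ≤ R := by linarith
  have hlog : Δ / (2 * R) ≤ log (R / R₁) := by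
    have h1 := one_sub_inv_le_log_of_pos (show 0 < R / R₁ by positivity)
    refine le_trans (le_of_eq ?_) h1
    rw [inv_div, one_sub_div (by linarith), div_eq_div_iff (by linarith) (by linarith)]
    simp only [hR₁, hΔ]
    ring
  have hcount : ∀ k, ∀ S : Finset ℂ, (∀ a ∈ S, ‖a‖ ≤ R₁) →
      ∑ a ∈ S, |(divisor (φ k) univ a : ℝ)| ≤ 2 * Y := by
    intro k S hS
    have h1 := (hc k R₁ R hR₁1 hR₁R).2 S hS
    have h2 : (∑ a ∈ S, |(divisor (φ k) univ a : ℝ)|) * (Δ / (2 * R)) ≤ c' * (1 + σ) := by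
      refine le_trans ?_ (h1.trans ?_)
      · gcongr
      · gcongr
        · linarith [hT0 k]
        · exact hck k
        · exact hσk k
    rw [← le_div_iff₀ (by positivity)] at h2
    refine h2.trans (le_of_eq ?_)
    rw [hY]
    field_simp
  have hfin : ∀ k, (divisor (φ k) (closedBall 0 R₁)).support.Finite := fun k ↦
    finiteSupport _ (isCompact_closedBall 0 R₁)
  set S : ι → Finset ℂ := fun k ↦ (hfin k).toFinset with hS
  have hSmem : ∀ k a, a ∈ S k ↔ divisor (φ k) (closedBall 0 R₁) a ≠ 0 := by
    intro k a
    exact (hfin k).mem_toFinset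
  have hSball : ∀ k, ∀ a ∈ S k, a ∈ closedBall (0 : ℂ) R₁ := by
    intro k a ha
    refine (divisor (φ k) (closedBall 0 R₁)).supportWithinDomain ?_
    rwa [hSmem] at ha
  have hSdiv : ∀ k, ∀ a ∈ S k, divisor (φ k) (closedBall 0 R₁) a = divisor (φ k) univ a := by
    intro k a ha
    rw [divisor_apply (hφ k).meromorphicOn (hSball k a ha),
      divisor_apply (hφ k).meromorphicOn (mem_univ a)]
  have hN : ∀ k, ∑ a ∈ S k, |(divisor (φ k) (closedBall 0 R₁) a : ℝ)| ≤ 2 * Y := by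
    intro k
    refine le_trans (le_of_eq ?_) (hcount k (S k) fun a ha ↦ by simpa using hSball k a ha)
    exact Finset.sum_congr rfl fun a ha ↦ by rw [hSdiv k a ha]
  have hcard : ∀ k, ((S k).card : ℝ) ≤ 2 * Y := by
    intro k
    refine le_trans ?_ (hN k)
    rw [Finset.card_eq_sum_ones, Nat.cast_sum]
    refine Finset.sum_le_sum fun a ha ↦ ?_
    rw [hSmem] at ha
    have := Int.one_le_abs ha
    exact_mod_cast this
  set M : Finset ℝ := Finset.univ.biUnion fun k ↦ (S k).image fun a ↦ ‖a‖ with hM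
  have hMcard : (M.card : ℝ) ≤ m * (2 * Y) := by
    calc (M.card : ℝ) ≤ ∑ k, ((S k).card : ℝ) := by
          rw [← Nat.cast_sum]
          exact_mod_cast Finset.card_biUnion_le.trans
            (Finset.sum_le_sum fun k _ ↦ Finset.card_image_le)
      _ ≤ ∑ k : ι, 2 * Y := Finset.sum_le_sum fun k _ ↦ hcard k
      _ = m * (2 * Y) := by rw [Finset.sum_const, nsmul_eq_mul, Finset.card_univ]
  obtain ⟨ρ, hρ, hρZ, hρM⟩ := exists_mem_Icc_le_abs_sub r (show 0 < Δ / 8 by positivity) M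
    ((hZ R).image fun z ↦ ‖z‖)
  have hs : Δ / (64 * (m + 1) * Y) ≤ Δ / 8 / (4 * (M.card + 1)) := by
    rw [div_div]
    refine div_le_div_of_nonneg_left hΔ0.le (by positivity) ?_
    linarith
  have hρR : ρ ≤ R := by
    have := hρ.2
    linarith
  obtain ⟨he1, he2, he3⟩ := cauchyRadius_le hm0 hY1 hΔ0 (by linarith : 0 ≤ R₁)
    (hR₁R.trans hRY) hYΔ (by linarith : 0 ≤ c' * (1 + σ)) hL
  set η := 1 / (2000 * (m + 1) * Y ^ 3) with hη
  have hη0 : 0 < η := by positivity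
  have hη1 : η ≤ 1 := by linarith
  refine ⟨ρ, ⟨hρ.1, hρR⟩, fun z hz hzZ ↦ hρZ ⟨z, ⟨hzZ, ?_⟩, by simpa using hz⟩,
    log (n.factorial * exp d / η ^ n), ?_, ?_⟩
  · rw [mem_closedBall_zero_iff, mem_sphere_zero_iff_norm.1 hz]
    exact hρR
  · exact log_cauchyConstant_le n d hA1 hc'1 hσ0 hR1 hΔ0 hΔ1
  · intro z hz k hzk i hi
    have hzn : ‖z‖ = ρ := mem_sphere_zero_iff_norm.1 hz
    have hzs : ∀ a ∈ S k, Δ / (64 * (m + 1) * Y) ≤ ‖z - a‖ := by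
      intro a ha
      refine (hs.trans (hρM ‖a‖ ?_)).trans ?_
      · simp only [hM, Finset.mem_biUnion, Finset.mem_image]
        exact ⟨k, Finset.mem_univ k, a, ha, rfl⟩
      · rw [← hzn]
        exact abs_norm_sub_norm_le z a
    have hLk : circleAverage (fun z ↦ |log ‖φ k z‖|) 0 R₁ ≤ c' * (1 + σ) := by
      refine (hc k R₁ R hR₁1 hR₁R).1.trans ?_
      gcongr
      · linarith [hT0 k]
      · exact hck k
      · exact hσk k
    have hmain := norm_iteratedDeriv_pow_le (z := z) hR₁1 (hφ k).meromorphicOn (hφ' k) rfl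
      (hSmem k) (hN k) hLk (by positivity : 0 < Δ / 8) (by linarith [hρ.2]) hzk (by positivity) hzs
      hη0 he1 he2 he3 i d
    refine hmain.trans ?_
    rw [exp_log (by positivity)]
    calc (i.factorial : ℝ) * (exp d * ‖φ k z‖ ^ d) / η ^ i
        ≤ n.factorial * (exp d * ‖φ k z‖ ^ d) / η ^ n := by
          have h1 : η ^ n ≤ η ^ i := pow_le_pow_of_le_one hη0.le hη1 hi
          have h2 : (i.factorial : ℝ) ≤ n.factorial := by
            exact_mod_cast Nat.factorial_le hi
          gcongr
      _ = n.factorial * exp d / η ^ n * ‖φ k z‖ ^ d := by ring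

lemma Differentiable.finite_zeros_inter_closedBall {f : ℂ → ℂ} (hf : Differentiable ℂ f)
    (h0 : f ≠ 0) (ρ : ℝ) : ({z | f z = 0} ∩ closedBall 0 ρ).Finite := by
  obtain ⟨x, hx⟩ := Function.ne_iff.1 h0
  have h1 := AnalyticOnNhd.preimage_zero_mem_codiscrete (fun z _ ↦ hf.analyticAt z) hx
  have h2 := (isCompact_closedBall (0 : ℂ) ρ).finite_sdiff_of_mem_codiscreteWithin
    (codiscreteWithin_mono (subset_univ _) h1)
  refine h2.subset fun z hz ↦ ⟨hz.2, fun h ↦ h hz.1⟩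

lemma norm_wronskianDet_le {n : ℕ} {f : Fin n → ℂ → ℂ} {z : ℂ} {K : ℝ} {b : Fin n → ℝ}
    (h : ∀ k, ∀ i ≤ n, ‖iteratedDeriv i (f k) z‖ ≤ K * b k) :
    ‖wronskianDet f z‖ ≤ n.factorial * (K ^ n * ∏ k, b k) := by
  rw [wronskianDet, Matrix.det_apply]
  refine (norm_sum_le _ _).trans ?_
  calc _ ≤ ∑ _σ : Equiv.Perm (Fin n), K ^ n * ∏ k, b k := by
        refine Finset.sum_le_sum fun σ _ ↦ ?_
        have h1 : ∀ (u : ℤˣ) (x : ℂ), ‖u • x‖ = ‖x‖ := by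
          intro u x
          rcases Int.units_eq_one_or u with rfl | rfl <;> simp
        rw [h1, norm_prod]
        have h2 : K ^ n * ∏ k, b k = ∏ k, K * b (σ k) := by
          rw [Finset.prod_mul_distrib, Equiv.prod_comp σ b]
          simp
        rw [h2]
        refine Finset.prod_le_prod (fun k _ ↦ norm_nonneg _) fun k _ ↦ ?_
        exact h (σ k) k k.2.le
    _ = _ := by simp [Fintype.card_perm]

/-- The quotients of entire functions whose `d`-th powers satisfy a single linear relation have
logarithmic growth. -/
lemma exists_characteristic_div_le_log {n d : ℕ} (hn : 1 ≤ n) (hd : (n - 1) * (n + 1) < d)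
    {G : Fin (n + 1) → ℂ → ℂ} (hG : ∀ k, Differentiable ℂ (G k)) (hG0 : ∀ k, G k ≠ 0)
    (hsum : ∀ z, ∑ k, G k z ^ d = 0) (q : Fin (n + 1))
    (hW : wronskianDet (fun k z ↦ G (q.succAbove k) z ^ d) ≠ 0) (k : Fin (n + 1)) :
    ∃ C, ∀ r, 1 ≤ r → characteristic (G k / G q) ⊤ r ≤ C * (1 + log (r + 1)) := by
  set W := wronskianDet (fun k z ↦ G (q.succAbove k) z ^ d) with hWdef
  have hφ : ∀ k, Meromorphic (G k / G q) := fun k ↦ (hG k).meromorphic.div (hG q).meromorphic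
  have hφ' : ∀ k z, meromorphicOrderAt (G k / G q) z ≠ ⊤ := by
    intro k z
    rw [div_eq_mul_inv, meromorphicOrderAt_mul ((hG k).meromorphic z) ((hG q).meromorphic z).inv,
      meromorphicOrderAt_inv]
    have h1 := (hG k).meromorphicOrderAt_ne_top (hG0 k) z
    have h2 := (hG q).meromorphicOrderAt_ne_top (hG0 q) z
    lift meromorphicOrderAt (G k) z to ℤ using h1 with x
    lift meromorphicOrderAt (G q) z to ℤ using h2 with y
    exact WithTop.coe_ne_top (a := x + -y)
  have hWd : Differentiable ℂ W :=
    differentiable_wronskianDet fun k ↦ (hG (q.succAbove k)).fun_pow d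
  set Z : Set ℂ := {z | W z = 0} ∪ ⋃ k, {z | G k z = 0} with hZ
  have hZfin : ∀ ρ, (Z ∩ closedBall 0 ρ).Finite := by
    intro ρ
    rw [hZ, union_inter_distrib_right, iUnion_inter]
    exact (hWd.finite_zeros_inter_closedBall hW ρ).union
      (finite_iUnion fun k ↦ (hG k).finite_zeros_inter_closedBall (hG0 k) ρ)
  obtain ⟨C, hC0, hC⟩ := exists_norm_iteratedDeriv_pow_le hφ hφ' hZfin n d
  obtain ⟨c₁, hc₁⟩ := exists_curveOrder_le hn (by nlinarith : n - 1 ≤ d) hG hG0 hsum q hW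
  choose c₂ hc₂ using fun k ↦ exists_characteristic_div_le_curveOrder hG hG0 k q
  set E : ℝ := log n.factorial + n * C + |c₁| with hE
  have hn1 : (1 : ℝ) ≤ n.factorial := by exact_mod_cast n.factorial_pos
  have hE0 : 0 ≤ E := by
    have := log_nonneg hn1
    positivity
  set σ : ℝ → ℝ := fun r ↦ ∑ k, characteristic (G k / G q) ⊤ r with hσ
  have hσmono : MonotoneOn σ (Ioi 0) := fun r hr R hR h ↦
    Finset.sum_le_sum fun k _ ↦ characteristic_monotoneOn (hφ k) hr hR h
  have hd1 : (1 : ℝ) ≤ d - (n - 1) * (n + 1) := by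
    have h1 : (n - 1) * (n + 1) + 1 ≤ d := hd
    have h2 : (((n - 1) * (n + 1) + 1 : ℕ) : ℝ) ≤ d := by exact_mod_cast h1
    push_cast [Nat.cast_sub hn] at h2
    linarith
  have hbound : ∀ r R, 1 ≤ r → r < R → R ≤ r + 1 →
      σ r ≤ (∑ k, (E + |c₂ k|)) * (1 + log⁺ (σ R) + log (1 / (R - r)) + log R) := by
    intro r R hr hrR hR
    obtain ⟨ρ, hρ, hρZ, B, hB, hder⟩ := hC r R hr hrR hR
    set X := 1 + log⁺ (σ R) + log (1 / (R - r)) + log R with hX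
    have hX1 : 1 ≤ X := by
      have h1 := posLog_nonneg (x := σ R)
      have h2 := log_nonneg ((one_le_div (sub_pos.2 hrR)).2 (show R - r ≤ 1 by linarith))
      have h3 := log_nonneg (show 1 ≤ R by linarith)
      linarith
    have hGne : ∀ z ∈ sphere (0 : ℂ) ρ, ∀ k, G k z ≠ 0 := fun z hz k h ↦
      hρZ z hz (Or.inr (mem_iUnion.2 ⟨k, h⟩))
    have hWne : ∀ z ∈ sphere (0 : ℂ) ρ, W z ≠ 0 := fun z hz h ↦ hρZ z hz (Or.inl h)
    have hρ1 : 1 ≤ ρ := hr.trans hρ.1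
    have hWle : ∀ z ∈ sphere (0 : ℂ) ρ, ∀ p : Fin (n + 1),
        ‖W z‖ ≤ exp (log n.factorial + n * B) * ∏ k, ‖G (p.succAbove k) z‖ ^ d := by
      intro z hz p
      obtain ⟨ε, hε, hεW⟩ := exists_wronskianDet_eq_mul
        (fun k z ↦ ((hG k).fun_pow d).analyticAt z) hsum p q
      have hGq := hGne z hz q
      have hφan : ∀ k, AnalyticAt ℂ (G k / G q) z := fun k ↦
        ((hG k).analyticAt z).div ((hG q).analyticAt z) hGq
      have hp : wronskianDet (fun k z ↦ G (p.succAbove k) z ^ d) z =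
          (G q z ^ d) ^ n * wronskianDet (fun k z ↦ (G (p.succAbove k) / G q) z ^ d) z := by
        rw [← wronskianDet_mul (h := fun z ↦ G q z ^ d) (((hG q).fun_pow d).analyticAt z)
          fun k ↦ (hφan _).fun_pow d]
        refine wronskianDet_congr fun k ↦ ?_
        filter_upwards [(hG q).continuous.continuousAt.eventually_ne hGq] with w hw
        rw [Pi.div_apply, div_pow, mul_div_cancel₀ _ (pow_ne_zero d hw)]
      have hdet := norm_wronskianDet_le
        (f := fun (k : Fin n) z ↦ (G (p.succAbove k) / G q) z ^ d) (z := z) (K := exp B)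
        (b := fun k ↦ ‖(G (p.succAbove k) / G q) z‖ ^ d)
        fun k i hi ↦ hder z hz (p.succAbove k) (hφan _) i hi
      have hWz : W z = ε * wronskianDet (fun k z ↦ G (p.succAbove k) z ^ d) z := hεW z
      rw [hWz, norm_mul, hε, one_mul, hp, norm_mul]
      have hGq' : ‖G q z‖ ^ d ≠ 0 := pow_ne_zero d (norm_ne_zero_iff.2 hGq)
      calc _ ≤ ‖(G q z ^ d) ^ n‖ * (n.factorial * (exp B ^ n *
            ∏ k, ‖(G (p.succAbove k) / G q) z‖ ^ d)) := by gcongr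
        _ = n.factorial * exp B ^ n *
            ((‖G q z‖ ^ d) ^ n * ∏ k, ‖(G (p.succAbove k) / G q) z‖ ^ d) := by
          rw [norm_pow, norm_pow]
          ring
        _ = _ := by
          rw [exp_add, exp_log (by linarith), exp_nat_mul]
          congr 1
          simp only [Pi.div_apply, norm_div, div_pow, Finset.prod_div_distrib]
          simp only [Finset.prod_const, Finset.card_univ, Fintype.card_fin]
          exact mul_div_cancel₀ _ (pow_ne_zero n hGq')
    have hcurve := hc₁ ρ (log n.factorial + n * B) hρ1 hGne hWne hWle
    have hcurve' : curveOrder G ρ ≤ E * X := by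
      have h1 : (d - (n - 1) * (n + 1) : ℝ) * curveOrder G ρ ≤ E * X := by
        refine hcurve.trans ?_
        have h2 : (n : ℝ) * B ≤ n * (C * X) := by gcongr
        have h3 : log n.factorial ≤ log n.factorial * X :=
          le_mul_of_one_le_right (log_nonneg hn1) hX1
        have h4 : c₁ ≤ |c₁| * X :=
          (le_abs_self _).trans (le_mul_of_one_le_right (abs_nonneg _) hX1)
        rw [hE, add_mul, add_mul, mul_assoc]
        linarith
      rcases le_total (curveOrder G ρ) 0 with h | h
      · exact h.trans (by positivity)
      · exact (le_mul_of_one_le_left h hd1).trans h1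
    refine (hσmono (show 0 < r by linarith) (show 0 < ρ by linarith) hρ.1).trans ?_
    rw [Finset.sum_mul]
    refine Finset.sum_le_sum fun k _ ↦ ?_
    have h1 := hc₂ k ρ hρ1 fun z hz ↦ hGne z hz q
    have h2 : c₂ k ≤ |c₂ k| * X :=
      (le_abs_self _).trans (le_mul_of_one_le_right (abs_nonneg _) hX1)
    rw [add_mul]
    linarith
  obtain ⟨C', hC'⟩ := le_log_of_le_log_of_monotoneOn hσmono
    (Finset.sum_nonneg fun k _ ↦ by positivity) hbound
  refine ⟨C', fun r hr ↦ le_trans ?_ (hC' r hr)⟩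
  exact Finset.single_le_sum (f := fun k ↦ characteristic (G k / G q) ⊤ r)
    (fun j _ ↦ characteristic_nonneg hr) (Finset.mem_univ k)

lemma exists_eq_mul_of_periodic {n d : ℕ} (hn : 1 ≤ n) (hd : (n - 1) * (n + 1) < d)
    {G : Fin (n + 1) → ℂ → ℂ} (hG : ∀ k, Differentiable ℂ (G k)) (hG0 : ∀ k, G k ≠ 0)
    (hsum : ∀ z, ∑ k, G k z ^ d = 0) (q : Fin (n + 1))
    (hW : wronskianDet (fun k z ↦ G (q.succAbove k) z ^ d) ≠ 0) {w : ℂ} (hw : w ≠ 0)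
    (hper : ∀ k, Function.Periodic (G k) w) (k : Fin (n + 1)) :
    ∃ c, ∀ z, G k z = c * G q z := by
  obtain ⟨z₀, hz₀⟩ := Function.ne_iff.1 (hG0 q)
  simp only [Pi.zero_apply] at hz₀
  by_contra! hne
  set c := G k z₀ / G q z₀ with hc
  set h : ℂ → ℂ := fun z ↦ G k z - c * G q z with hh
  have hhd : Differentiable ℂ h := (hG k).sub ((hG q).const_mul c)
  have hh0 : h ≠ 0 := by
    obtain ⟨z, hz⟩ := hne c
    exact fun h0 ↦ hz (sub_eq_zero.1 (congrFun h0 z))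
  have hφ : Meromorphic (G k / G q) := (hG k).meromorphic.div (hG q).meromorphic
  obtain ⟨C, hC⟩ := exists_characteristic_div_le_log hn hd hG hG0 hsum q hW k
  suffices h1 : ∀ m : ℕ, 1 ≤ divisor (fun z ↦ (G k / G q) z - c) univ (z₀ + m * w) by
    obtain ⟨r, hr, hlt⟩ := not_characteristic_le_log hφ c z₀ w hw h1 C
    exact absurd (hC r hr) hlt.not_ge
  intro m
  set p := z₀ + m * w with hp
  have hval : ∀ j, G j p = G j z₀ := fun j ↦ by
    simpa [hp] using (hper j).nat_mul m z₀
  have hqp : G q p ≠ 0 := by rwa [hval]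
  have hhp : h p = 0 := by simp [hh, hval, hc, hz₀]
  have hev : (fun z ↦ (G k / G q) z - c) =ᶠ[𝓝[≠] p] h * (G q)⁻¹ := by
    filter_upwards [((hG q).continuous.continuousAt.eventually_ne hqp).filter_mono
      nhdsWithin_le_nhds] with z hz
    simp only [Pi.div_apply, Pi.mul_apply, Pi.inv_apply, hh]
    field_simp
  have hmer : MeromorphicOn (fun z ↦ (G k / G q) z - c) univ :=
    fun z _ ↦ (hφ z).sub (MeromorphicAt.const c z)
  have hha : AnalyticAt ℂ h p := hhd.analyticAt p
  have hqa : AnalyticAt ℂ (G q) p := (hG q).analyticAt p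
  have hord : meromorphicOrderAt (fun z ↦ (G k / G q) z - c) p = meromorphicOrderAt h p := by
    rw [meromorphicOrderAt_congr hev,
      meromorphicOrderAt_mul hha.meromorphicAt hqa.meromorphicAt.inv, meromorphicOrderAt_inv,
      hqa.meromorphicOrderAt_eq, hqa.analyticOrderAt_eq_zero.2 hqp]
    simp
  rw [divisor_apply hmer (mem_univ p), hord]
  have htop := hhd.meromorphicOrderAt_ne_top hh0 p
  have hpos : 0 < meromorphicOrderAt h p := by
    rw [hha.meromorphicOrderAt_eq] at htop ⊢
    have := hha.analyticOrderAt_ne_zero.2 hhp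
    revert htop this
    generalize analyticOrderAt h p = x
    cases x with
    | top => simp
    | coe x => simp [Nat.pos_iff_ne_zero]
  lift meromorphicOrderAt h p to ℤ using htop with x
  rw [WithTop.untop₀_coe]
  exact WithTop.coe_pos.1 hpos

/-- If `g_k` are entire with `∑ g_k ^ d = 0` and all these powers but one are linearly independent,
then the `g_k` are proportional, provided `d` is large compared to the number of functions. -/
lemma exists_eq_mul_of_linearIndependent {n d : ℕ} (hn : 1 ≤ n) (hd : (n - 1) * (n + 1) < d)
    {g : Fin (n + 1) → ℂ → ℂ} (hg : ∀ k, Differentiable ℂ (g k)) (hg0 : ∀ k, g k ≠ 0)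
    (hsum : ∀ z, ∑ k, g k z ^ d = 0) (q : Fin (n + 1))
    (hind : LinearIndependent ℂ fun k ↦ g (q.succAbove k) ^ d) (k : Fin (n + 1)) :
    ∃ c, ∀ z, g k z = c * g q z := by
  have eq_of_comp_exp : ∀ {F₁ F₂ : ℂ → ℂ}, Differentiable ℂ F₁ → Differentiable ℂ F₂ →
      (∀ z, F₁ (Complex.exp z) = F₂ (Complex.exp z)) → F₁ = F₂ := fun {F₁ F₂} h₁ h₂ h ↦ by
    refine Continuous.ext_on (dense_compl_singleton (0 : ℂ)) h₁.continuous h₂.continuous ?_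
    intro z hz
    rw [← Complex.exp_log hz]
    exact h _
  have hG : ∀ j, Differentiable ℂ fun z ↦ g j (Complex.exp z) :=
    fun j ↦ (hg j).comp Complex.differentiable_exp
  have hW : wronskianDet (fun j z ↦ g (q.succAbove j) (Complex.exp z) ^ d) ≠ 0 := by
    intro h0
    obtain ⟨c, hc, V, -, hVo, ⟨v, hv⟩, hV⟩ := exists_sum_eq_zero_of_wronskianDet_eq_zero
      (f := fun j z ↦ g (q.succAbove j) (Complex.exp z) ^ d) isOpen_univ univ_nonempty
      (fun j z _ ↦ ((hG _).pow d).analyticAt z) (fun z _ ↦ congrFun h0 z)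
    have hF : Differentiable ℂ fun z ↦ ∑ j, c j * g (q.succAbove j) z ^ d :=
      Differentiable.fun_sum fun j _ ↦ ((hg _).pow d).const_mul (c j)
    have hE := (hF.comp Complex.differentiable_exp).differentiableOn.analyticOnNhd isOpen_univ
      |>.eq_of_eventuallyEq (g := 0) (fun z _ ↦ analyticAt_const) (z₀ := v)
        (by filter_upwards [hVo.mem_nhds hv] with z hz using hV z hz)
    have hF0 := eq_of_comp_exp hF (differentiable_const 0) (congrFun hE)
    refine hc (funext (Fintype.linearIndependent_iff.1 hind c ?_))
    ext z
    simpa using congrFun hF0 z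
  obtain ⟨c, hc⟩ := exists_eq_mul_of_periodic hn hd hG
    (fun j h0 ↦ hg0 j (eq_of_comp_exp (hg j) (differentiable_const 0) (congrFun h0)))
    (fun z ↦ hsum (Complex.exp z)) q hW Complex.two_pi_I_ne_zero
    (fun j z ↦ by simp only [Complex.exp_periodic z]) k
  exact ⟨c, congrFun (eq_of_comp_exp (hg k) ((hg q).const_mul c) hc)⟩

/-- key Claim in the proof of Theorem B: a nontrivial vanishing linear
combination `Σ_{k∈K} a_k g_k^d ≡ 0` of `d`-th powers of entire functions, none
identically zero, with `|K| = γ ≥ 2` and `d > γ(γ-2)`, forces two of the functions to be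
proportional. -/
theorem stmt_10 {ι : Type*} (K : Finset ι) (γ d : ℕ) (hK : K.card = γ) (hγ : 2 ≤ γ)
    (hd : γ * (γ - 2) < d)
    (a : ι → ℂ) (ha : ∀ k ∈ K, a k ≠ 0)
    (g : ι → ℂ → ℂ) (hg : ∀ k ∈ K, Differentiable ℂ (g k)) (hg0 : ∀ k ∈ K, g k ≠ 0)
    (hrel : ∀ z : ℂ, ∑ k ∈ K, a k * (g k z) ^ d = 0) :
    ∃ i ∈ K, ∃ j ∈ K, i ≠ j ∧ ∃ c : ℂ, c ≠ 0 ∧ ∀ z, g i z = c * g j z := by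
  classical
  have hne : K.Nonempty := by
    rw [← Finset.card_pos]
    omega
  subst hK
  clear hγ
  induction K using Finset.strongInduction generalizing a with
  | H K ih =>
  have hd0 : d ≠ 0 := by omega
  obtain ⟨q, hq⟩ := hne
  by_cases hind : LinearIndepOn ℂ (fun k ↦ g k ^ d) (K.erase q : Set ι)
  swap
  · rw [linearIndepOn_finset_iff] at hind
    push Not at hind
    obtain ⟨c, hc, k, hk, hck⟩ := hind
    set S := (K.erase q).filter (c · ≠ 0) with hS
    have hSK : S ⊂ K := (Finset.filter_subset _ _).trans_ssubset (Finset.erase_ssubset hq)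
    obtain ⟨i, hi, j, hj, h⟩ := ih S hSK c
      (fun k hk ↦ (Finset.mem_filter.1 hk).2) (fun k hk ↦ hg k (hSK.subset hk))
      (fun k hk ↦ hg0 k (hSK.subset hk))
      (fun z ↦ by
        rw [hS, Finset.sum_filter_of_ne fun k _ h ↦ left_ne_zero_of_mul h]
        simpa using congrFun hc z) ⟨k, Finset.mem_filter.2 ⟨hk, hck⟩⟩
      (lt_of_le_of_lt (by gcongr) hd)
    exact ⟨i, hSK.subset hi, j, hSK.subset hj, h⟩
  obtain ⟨n, hn⟩ : ∃ n, K.card = n + 1 :=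
    Nat.exists_eq_succ_of_ne_zero (Finset.card_ne_zero_of_mem hq)
  rw [hn] at hd
  obtain rfl | hn1 := Nat.eq_zero_or_pos n
  · obtain ⟨x, rfl⟩ := Finset.card_eq_one.1 hn
    refine absurd (funext fun z ↦ ?_) (hg0 x (by simp))
    simpa [ha x, hd0] using hrel z
  let e : Fin (n + 1) ≃ K := (K.equivFinOfCardEq hn).symm
  obtain ⟨p, hp⟩ := e.surjective ⟨q, hq⟩
  choose b hb using fun k ↦ IsAlgClosed.exists_pow_nat_eq (a k) (Nat.pos_of_ne_zero hd0)
  have hb0 : ∀ k ∈ K, b k ≠ 0 := fun k hk h0 ↦ ha k hk (by rw [← hb k, h0, zero_pow hd0])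
  have hmem : ∀ k, (e (p.succAbove k) : ι) ∈ K.erase q := fun k ↦ by
    refine Finset.mem_erase.2 ⟨fun h ↦ p.succAbove_ne k (e.injective ?_), (e _).2⟩
    rw [hp]
    exact Subtype.ext h
  obtain ⟨k, hk⟩ : ∃ k, k ≠ p := by
    have : Nontrivial (Fin (n + 1)) := Fin.nontrivial_iff_two_le.2 (by omega)
    exact exists_ne p
  obtain ⟨c, hc⟩ := exists_eq_mul_of_linearIndependent (d := d)
    (g := fun k z ↦ b (e k) * g (e k) z) hn1
    (by rwa [mul_comm, show n - 1 = n + 1 - 2 by omega])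
    (fun k ↦ (hg _ (e k).2).const_mul _)
    (fun k h0 ↦ hg0 _ (e k).2 (funext fun z ↦
      (mul_eq_zero.1 (congrFun h0 z)).resolve_left (hb0 _ (e k).2)))
    (fun z ↦ by
      simp only [mul_pow, hb]
      rw [e.sum_comp fun k : K ↦ a k * g k z ^ d, ← hrel z, ← Finset.sum_coe_sort K])
    p
    (by
      have h := (hind.linearIndependent.comp
        (fun k ↦ (⟨e (p.succAbove k), hmem k⟩ : (K.erase q : Set ι)))
        fun k l h ↦ p.succAbove_right_injective (e.injective (Subtype.ext
          (congrArg Subtype.val h :)))).units_smul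
        fun k ↦ Units.mk0 (a (e (p.succAbove k))) (ha _ (e _).2)
      convert h using 1
      ext k z
      simp [mul_pow, hb, Units.smul_def]) k
  have hbk := hb0 _ (e k).2
  have hkp : ∀ z, g (e k) z = (c * b (e p) / b (e k)) * g (e p) z := fun z ↦ by
    have := hc z
    field_simp
    linear_combination this
  refine ⟨e k, (e k).2, e p, (e p).2, fun h ↦ hk (e.injective (Subtype.ext h)), _, ?_, hkp⟩
  intro h0
  exact hg0 _ (e k).2 (funext fun z ↦ by rw [hkp, h0, zero_mul, Pi.zero_apply])
end

section
/- (Classical Borel theorem) Let g_1, …, g_m be nowhere-vanishing entire functions on ℂ satisfying g_1 + g_2 + ⋯ + g_m = 0 identically, with m ≥ 3. Then there exist distinct indices i ≠ j such that g_i/g_j is a nonzero constant. -/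
section

open ValueDistribution Filter Metric Set

theorem characteristic_top_eq_proximity {f : ℂ → ℂ} (hf : Differentiable ℂ f) :
    characteristic f ⊤ = proximity f ⊤ := by
  have h : AnalyticOnNhd ℂ f univ := fun z _ ↦ hf.analyticAt z
  have h0 : (MeromorphicOn.divisor f univ)⁻ = 0 := by
    rw [negPart_eq_zero]
    exact MeromorphicOn.AnalyticOnNhd.divisor_nonneg h
  rw [characteristic, logCounting_top, h0]
  simp

theorem proximity_inv_top_le {f : ℂ → ℂ} (hf : Differentiable ℂ f) :
    ∃ C : ℝ, 0 ≤ C ∧ ∀ R, 1 ≤ R → proximity f⁻¹ ⊤ R ≤ characteristic f ⊤ R + C := by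
  refine ⟨max |Real.log ‖f 0‖| |Real.log ‖meromorphicTrailingCoeffAt f 0‖|,
    le_max_of_le_left (abs_nonneg _), fun R hR ↦ ?_⟩
  have hm : Meromorphic f := fun z ↦ (hf.analyticAt z).meromorphicAt
  have h1 := abs_le.1 (characteristic_sub_characteristic_inv_le hm (R := R))
  have h2 : 0 ≤ logCounting f⁻¹ ⊤ R := logCounting_nonneg hR
  have h3 : characteristic f⁻¹ ⊤ R = proximity f⁻¹ ⊤ R + logCounting f⁻¹ ⊤ R := rfl
  linarith [h1.1]

theorem circleAverage_abs_log_norm_le {f : ℂ → ℂ} (hf : Differentiable ℂ f) :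
    ∃ C : ℝ, 0 ≤ C ∧ ∀ R, 1 ≤ R → Real.circleAverage (fun z ↦ |Real.log ‖f z‖|) 0 R ≤
      2 * characteristic f ⊤ R + C := by
  obtain ⟨C, hC, h⟩ := proximity_inv_top_le hf
  have hm : Meromorphic f := fun z ↦ (hf.analyticAt z).meromorphicAt
  refine ⟨C, hC, fun R hR ↦ ?_⟩
  have h1 : Real.circleAverage (fun z ↦ |Real.log ‖f z‖|) 0 R =
      proximity f ⊤ R + proximity f⁻¹ ⊤ R := by
    rw [proximity_top, proximity_top, ← Real.circleAverage_add
      hm.meromorphicOn.circleIntegrable_posLog_norm hm.inv.meromorphicOn.circleIntegrable_posLog_norm]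
    congr 1
    ext z
    simp only [Pi.add_apply, Pi.inv_apply, norm_inv, Real.posLog, Real.log_inv]
    grind
  have h2 := h R hR
  rw [characteristic_top_eq_proximity hf] at *
  linarith

theorem abs_log_norm_le_circleAverage {f : ℂ → ℂ} (hf : Differentiable ℂ f)
    (hf0 : ∀ z, f z ≠ 0) {R : ℝ} {w : ℂ} (hw : ‖w‖ < R) :
    |Real.log ‖f w‖| ≤
      2 * R / (R - ‖w‖) * Real.circleAverage (fun z ↦ |Real.log ‖f z‖|) 0 R := by
  have hR : 0 < R := (norm_nonneg w).trans_lt hw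
  have hw' : w ∈ ball (0 : ℂ) R := by simpa using hw
  have hcont : Continuous fun z ↦ Real.log ‖f z‖ :=
    hf.continuous.norm.log fun z ↦ norm_ne_zero_iff.2 (hf0 z)
  have hker : ContinuousOn (Complex.re ∘ herglotzRieszKernel 0 w) (sphere 0 |R|) := by
    exact Complex.continuous_re.comp_continuousOn (continuousOn_herglotzRieszKernel_sphere hw')
  rw [← InnerProductSpace.HarmonicOnNhd.circleAverage_re_herglotzRieszKernel_smul
    (f := fun z ↦ Real.log ‖f z‖)
    (fun z _ ↦ AnalyticAt.harmonicAt_log_norm (hf.analyticAt z) (hf0 z)) hw']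
  refine Real.abs_circleAverage_le_circleAverage_abs.trans ?_
  rw [← smul_eq_mul (_ / _), ← Real.circleAverage_smul]
  refine Real.circleAverage_mono ?_ ?_ fun x hx ↦ ?_
  · exact (hker.smul hcont.continuousOn).abs.circleIntegrable'
  · exact (hcont.abs.const_smul _).continuousOn.circleIntegrable'
  rw [abs_of_pos hR] at hx
  have h1 := re_herglotzRieszKernel_le hx hw'
  have h2 := le_re_herglotzRieszKernel hx hw'
  change |((x - 0 + (w - 0)) / ((x - 0) - (w - 0))).re * Real.log ‖f x‖| ≤ _ * |Real.log ‖f x‖|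
  rw [abs_mul]
  gcongr
  have h3 : 0 ≤ (R - ‖w - 0‖) / (R + ‖w - 0‖) := by
    have : 0 < R - ‖w - 0‖ := by simpa using hw
    positivity
  rw [abs_of_nonneg (h3.trans h2)]
  refine h1.trans ?_
  rw [sub_zero]
  have : 0 < R - ‖w‖ := by linarith
  gcongr
  linarith

theorem exists_eq_exp {f : ℂ → ℂ} (hf : Differentiable ℂ f) (hf0 : ∀ z, f z ≠ 0) :
    ∃ h : ℂ → ℂ, (∀ z, HasDerivAt h (deriv f z / f z) z) ∧ ∀ z, f z = Complex.exp (h z) := by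
  have hd : Differentiable ℂ fun z ↦ deriv f z / f z := hf.deriv.div hf hf0
  obtain ⟨h, h0, hh⟩ := hd.isExactOn_univ.with_val_at 0 (Complex.log (f 0))
  have hh' : ∀ z, HasDerivAt h (deriv f z / f z) z := fun z ↦ hh z (mem_univ z)
  refine ⟨h, hh', fun z ↦ ?_⟩
  have key : ∀ z, HasDerivAt (fun z ↦ f z * Complex.exp (-h z)) 0 z := fun z ↦ by
    refine ((hf z).hasDerivAt.mul (hh' z).neg.cexp).congr_deriv ?_
    have := hf0 z
    field_simp
    simp
  have := is_const_of_deriv_eq_zero (fun z ↦ (key z).differentiableAt) (fun z ↦ (key z).deriv) z 0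
  simp only [h0, Complex.exp_neg, Complex.exp_log (hf0 0), mul_inv_cancel₀ (hf0 0)] at this
  field_simp [Complex.exp_ne_zero] at this
  exact this

theorem norm_deriv_le_of_abs_re_le {h : ℂ → ℂ} (hh : Differentiable ℂ h) {z : ℂ} {s M : ℝ}
    (hs : 0 < s) (hM : 0 < M) (hb : ∀ w ∈ ball z s, |(h w).re| ≤ M) :
    ‖deriv h z‖ ≤ 8 * M / s := by
  have hd : Differentiable ℂ fun w ↦ h (z + w) - h z := by fun_prop
  have hre : MapsTo (fun w ↦ h (z + w) - h z) (ball 0 s) {w | w.re ≤ 2 * M} := fun w hw ↦ by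
    have h1 := abs_le.1 (hb (z + w) (by simpa using hw))
    have h2 := abs_le.1 (hb z (mem_ball_self hs))
    simp only [mem_ofPred_eq, Complex.sub_re]
    linarith
  have hder : deriv (fun w ↦ h (z + w) - h z) 0 = deriv h z := by
    rw [deriv_sub_const, deriv_comp_const_add, add_zero]
  rw [← hder]
  refine (Complex.norm_deriv_le_of_forall_mem_sphere_norm_le (R := s / 2) (C := 4 * M)
    (half_pos hs) hd.diffContOnCl fun w hw ↦ ?_).trans (le_of_eq (by field_simp; norm_num))
  have hw' : ‖w‖ = s / 2 := by simpa using hw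
  refine (Complex.borelCaratheodory_zero (by positivity) hd.differentiableOn hre hs
    (by rw [mem_ball_zero_iff]; linarith) (by simp)).trans (le_of_eq ?_)
  rw [hw']
  field_simp
  ring

theorem norm_logDeriv_le {f : ℂ → ℂ} (hf : Differentiable ℂ f) (hf0 : ∀ z, f z ≠ 0) :
    ∃ C : ℝ, 0 ≤ C ∧ ∀ R, 1 ≤ R → ∀ z, ‖z‖ < R →
      ‖deriv f z / f z‖ ≤ C * (R * (1 + characteristic f ⊤ R)) / (R - ‖z‖) ^ 2 := by
  obtain ⟨h, hh, hexp⟩ := exists_eq_exp hf hf0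
  obtain ⟨C, hC, hav⟩ := circleAverage_abs_log_norm_le hf
  refine ⟨64 * (2 + C), by positivity, fun R hR z hz ↦ ?_⟩
  have hs : 0 < R - ‖z‖ := sub_pos.2 hz
  have hT : 0 ≤ characteristic f ⊤ R := characteristic_nonneg hR
  have hlog : ∀ w, Real.log ‖f w‖ = (h w).re := fun w ↦ by
    rw [hexp, Complex.norm_exp, Real.log_exp]
  rw [← (hh z).deriv]
  refine (norm_deriv_le_of_abs_re_le (fun w ↦ (hh w).differentiableAt) (half_pos hs)
    (M := 4 * R / (R - ‖z‖) * ((2 + C) * (1 + characteristic f ⊤ R))) (by positivity)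
    fun w hw ↦ ?_).trans (le_of_eq (by field_simp; norm_num))
  have hw1 : ‖w‖ ≤ ‖z‖ + (R - ‖z‖) / 2 := by
    have := norm_sub_norm_le w z
    rw [mem_ball, dist_eq_norm] at hw
    linarith
  rw [← hlog]
  refine (abs_log_norm_le_circleAverage hf hf0 (R := R) (by linarith)).trans ?_
  have h1 : (R - ‖z‖) / 2 ≤ R - ‖w‖ := by linarith
  have h2 : 2 * R / (R - ‖w‖) ≤ 4 * R / (R - ‖z‖) := by
    calc 2 * R / (R - ‖w‖) ≤ 2 * R / ((R - ‖z‖) / 2) := by gcongr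
      _ = _ := by field_simp; norm_num
  have h3 := hav R hR
  refine mul_le_mul h2 (h3.trans ?_) (Real.circleAverage_nonneg_of_nonneg fun x _ ↦ abs_nonneg _)
    (by positivity)
  nlinarith

theorem Differentiable.eq_zero_or_eq_zero_of_mul_eq_zero {f g : ℂ → ℂ} (hf : Differentiable ℂ f)
    (hg : Differentiable ℂ g) (h : f * g = 0) : f = 0 ∨ g = 0 := by
  have := AnalyticOnNhd.eq_zero_or_eq_zero_of_mul_eq_zero (U := univ)
    (fun z _ ↦ hf.analyticAt z) (fun z _ ↦ hg.analyticAt z) (fun z _ ↦ congrFun h z)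
    isPreconnected_univ
  simpa [funext_iff] using this

theorem exists_eq_smul_of_mul_deriv_eq {u w : ℂ → ℂ} (hu : Differentiable ℂ u)
    (hw : Differentiable ℂ w) (hw0 : w ≠ 0) (h : w * deriv u = deriv w * u) :
    ∃ c : ℂ, u = c • w := by
  obtain ⟨z, hz⟩ := Function.ne_iff.1 hw0
  obtain ⟨ε, hε, hball⟩ := Metric.isOpen_iff.1
    (isOpen_ne_fun hw.continuous continuous_const) z hz
  refine ⟨u z / w z, AnalyticOnNhd.eq_of_eventuallyEq (z₀ := z) (fun x _ ↦ hu.analyticAt x)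
    (fun x _ ↦ (hw.const_smul _).analyticAt x) ?_⟩
  filter_upwards [ball_mem_nhds z hε] with x hx
  have hd : DifferentiableOn ℂ (fun y ↦ u y / w y) (ball z ε) :=
    hu.differentiableOn.div hw.differentiableOn fun y hy ↦ hball hy
  have hconst : u x / w x = u z / w z :=
    isOpen_ball.is_const_of_deriv_eq_zero (convex_ball z ε).isPreconnected hd (fun y hy ↦ by
      have hy' : w y * deriv u y = deriv w y * u y := congrFun h y
      rw [deriv_fun_div (hu y) (hw y) (hball hy), mul_comm (deriv u y), hy']
      simp [mul_comm]) hx (mem_ball_self hε)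
  have hwx : w x ≠ 0 := hball hx
  rw [Pi.smul_apply, smul_eq_mul, ← hconst, div_mul_cancel₀ _ hwx]

/-- `u` is the product of `v` with a quotient of two elements of `S`. -/
def IsQuotientMultiple (S : Subalgebra ℂ (ℂ → ℂ)) (u v : ℂ → ℂ) : Prop :=
  ∃ a ∈ S, ∃ b ∈ S, a ≠ 0 ∧ a * u = b * v

namespace IsQuotientMultiple

variable {S : Subalgebra ℂ (ℂ → ℂ)} {u u' v a : ℂ → ℂ}

theorem refl (S : Subalgebra ℂ (ℂ → ℂ)) (v : ℂ → ℂ) : IsQuotientMultiple S v v :=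
  ⟨1, S.one_mem, 1, S.one_mem, one_ne_zero, rfl⟩

theorem zero (S : Subalgebra ℂ (ℂ → ℂ)) (v : ℂ → ℂ) : IsQuotientMultiple S 0 v :=
  ⟨1, S.one_mem, 0, S.zero_mem, one_ne_zero, by simp⟩

theorem add (hS : ∀ a ∈ S, Differentiable ℂ a) (hu : IsQuotientMultiple S u v)
    (hu' : IsQuotientMultiple S u' v) : IsQuotientMultiple S (u + u') v := by
  obtain ⟨a, ha, b, hb, ha0, hab⟩ := hu
  obtain ⟨a', ha', b', hb', ha0', hab'⟩ := hu'
  refine ⟨a * a', S.mul_mem ha ha', a' * b + a * b',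
    S.add_mem (S.mul_mem ha' hb) (S.mul_mem ha hb'), fun h ↦ ?_, ?_⟩
  · exact ((hS a ha).eq_zero_or_eq_zero_of_mul_eq_zero (hS a' ha') h).elim ha0 ha0'
  · linear_combination a' * hab + a * hab'

theorem mul_left (hu : IsQuotientMultiple S u v) (ha : a ∈ S) :
    IsQuotientMultiple S (a * u) v := by
  obtain ⟨b, hb, c, hc, hb0, hbc⟩ := hu
  exact ⟨b, hb, a * c, S.mul_mem ha hc, hb0, by linear_combination a * hbc⟩

theorem of_mul_left (hS : ∀ a ∈ S, Differentiable ℂ a) (ha : a ∈ S) (ha0 : a ≠ 0)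
    (hu : IsQuotientMultiple S (a * u) v) : IsQuotientMultiple S u v := by
  obtain ⟨b, hb, c, hc, hb0, hbc⟩ := hu
  refine ⟨b * a, S.mul_mem hb ha, c, hc, fun h ↦ ?_, by rw [mul_assoc, hbc]⟩
  exact ((hS b hb).eq_zero_or_eq_zero_of_mul_eq_zero (hS a ha) h).elim hb0 ha0

theorem sum (hS : ∀ a ∈ S, Differentiable ℂ a) {ι : Type*} {A : Finset ι} {f : ι → ℂ → ℂ}
    (h : ∀ i ∈ A, IsQuotientMultiple S (f i) v) : IsQuotientMultiple S (∑ i ∈ A, f i) v :=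
  Finset.sum_induction f (IsQuotientMultiple S · v) (fun _ _ ↦ add hS) (zero S v) h

end IsQuotientMultiple

theorem sum_eq_zero_of_sum_add_sum_eq_zero {S : Subalgebra ℂ (ℂ → ℂ)}
    (hS : ∀ a ∈ S, Differentiable ℂ a) (hS' : ∀ a ∈ S, deriv a ∈ S) {ι : Type*} [DecidableEq ι]
    {g L : ι → ℂ → ℂ} (hg : ∀ i, Differentiable ℂ (g i)) (hg0 : ∀ i, g i ≠ 0) {v : ℂ → ℂ}
    {A B : Finset ι} (hL : ∀ i ∈ A ∪ B, L i ∈ S) (hgL : ∀ i ∈ A ∪ B, deriv (g i) = L i * g i)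
    (hA : ∀ i ∈ A, IsQuotientMultiple S (g i) v) (hB : ∀ i ∈ B, ¬ IsQuotientMultiple S (g i) v)
    {a : ι → ℂ → ℂ} (ha : ∀ i ∈ A ∪ B, a i ∈ S)
    (hsum : ∑ i ∈ A, a i * g i + ∑ i ∈ B, a i * g i = 0) :
    ∑ i ∈ A, a i * g i = 0 := by
  induction B using Finset.induction generalizing a with
  | empty => simpa using hsum
  | insert n B hn ih =>
    have hsub : A ∪ B ⊆ A ∪ insert n B :=
      Finset.union_subset_union_right (Finset.subset_insert n B)
    have hnm : n ∈ A ∪ insert n B := by simp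
    replace ih := @ih (fun i hi ↦ hL i (hsub hi)) (fun i hi ↦ hgL i (hsub hi))
      (fun i hi ↦ hB i (Finset.mem_insert_of_mem hi))
    rw [Finset.sum_insert hn] at hsum
    by_cases han : a n = 0
    · exact ih (fun i hi ↦ ha i (hsub hi)) (by simpa [han] using hsum)
    have hderiv : ∀ C ⊆ A ∪ insert n B, deriv (∑ i ∈ C, a i * g i) =
        ∑ i ∈ C, (deriv (a i) + a i * L i) * g i := fun C hC ↦ by
      ext z
      rw [deriv_sum fun i hi ↦ ((hS _ (ha i (hC hi))) z).mul (hg i z), Finset.sum_apply]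
      refine Finset.sum_congr rfl fun i hi ↦ ?_
      rw [deriv_mul ((hS _ (ha i (hC hi))) z) (hg i z), hgL i (hC hi)]
      simp only [Pi.mul_apply, Pi.add_apply]
      ring
    have hdiff : ∀ C ⊆ A ∪ insert n B, Differentiable ℂ (∑ i ∈ C, a i * g i) := fun C hC ↦
      Differentiable.sum fun i hi ↦ (hS _ (ha i (hC hi))).mul (hg i)
    let p : ℂ → ℂ := deriv (a n) + a n * L n
    let b : ι → ℂ → ℂ := fun i ↦ a n * (deriv (a i) + a i * L i) - a i * p
    have hbsum : ∀ C ⊆ A ∪ insert n B, ∑ i ∈ C, b i * g i =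
        a n * deriv (∑ i ∈ C, a i * g i) - p * ∑ i ∈ C, a i * g i := fun C hC ↦ by
      rw [hderiv C hC, Finset.mul_sum, Finset.mul_sum, ← Finset.sum_sub_distrib]
      exact Finset.sum_congr rfl fun i _ ↦ by ring
    have hAs : A ⊆ A ∪ insert n B := Finset.subset_union_left
    have hBs : B ⊆ A ∪ insert n B := Finset.subset_union_right.trans hsub
    have hns : {n} ⊆ A ∪ insert n B := by simp
    set U := ∑ i ∈ A, a i * g i with hU
    have hwn : deriv (a n * g n) = p * g n := by simpa using hderiv {n} hns
    have hbA : ∑ i ∈ A, b i * g i = 0 := by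
      refine ih (fun i hi ↦ ?_) ?_
      · have hi' := hsub hi
        exact S.sub_mem (S.mul_mem (ha n hnm) (S.add_mem (hS' _ (ha i hi'))
          (S.mul_mem (ha i hi') (hL i hi')))) (S.mul_mem (ha i hi') (S.add_mem (hS' _ (ha n hnm))
          (S.mul_mem (ha n hnm) (hL n hnm))))
      · rw [hbsum A hAs, hbsum B hBs]
        have hV : ∑ i ∈ B, a i * g i = -(U + a n * g n) := by linear_combination hsum
        have hV' : deriv (-(U + a n * g n)) = -(deriv U + p * g n) := by
          rw [← hwn]
          ext z
          rw [deriv.neg, Pi.neg_apply, deriv_add (hdiff A hAs z)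
            ((hS _ (ha n hnm) z).mul (hg n z)), Pi.add_apply]
        rw [hV, hV', ← hU]
        ring
    have hW0 : a n * g n ≠ 0 := fun h ↦
      ((hS _ (ha n hnm)).eq_zero_or_eq_zero_of_mul_eq_zero (hg n) h).elim han (hg0 n)
    obtain ⟨c, hc⟩ := exists_eq_smul_of_mul_deriv_eq (hdiff A hAs)
      ((hS _ (ha n hnm)).mul (hg n)) hW0 (by
        rw [hbsum A hAs] at hbA
        rw [hwn]
        linear_combination g n * hbA)
    by_cases hc0 : c = 0
    · rw [hU, hc, hc0, zero_smul]
    refine absurd ?_ (hB n (Finset.mem_insert_self n B))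
    have hUq : IsQuotientMultiple S U v :=
      IsQuotientMultiple.sum hS fun i hi ↦ (hA i hi).mul_left (ha i (hAs hi))
    rw [hU, hc, ← smul_mul_assoc] at hUq
    exact hUq.of_mul_left hS (S.smul_mem (ha n hnm) c) (smul_ne_zero hc0 han)

/-- The subalgebra of entire functions `u` such that `‖u z‖` is bounded, for `‖z‖ ≤ r < R ≤ r + 1`,
by a constant times a power of `R * (1 + T R) / (R - r)`. -/
def moderateGrowth (T : ℝ → ℝ) (hT : ∀ R, 1 ≤ R → 0 ≤ T R) : Subalgebra ℂ (ℂ → ℂ) where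
  carrier := {u | Differentiable ℂ u ∧ ∃ C : ℝ, ∃ k : ℕ, 0 ≤ C ∧ ∀ r R, 1 ≤ r → r < R → R ≤ r + 1 →
    ∀ z, ‖z‖ ≤ r → ‖u z‖ ≤ C * (R * (1 + T R) / (R - r)) ^ k}
  mul_mem' := by
    rintro u v ⟨hu, C, k, hC, h⟩ ⟨hv, C', k', hC', h'⟩
    refine ⟨hu.mul hv, C * C', k + k', by positivity, fun r R hr hR hR' z hz ↦ ?_⟩
    rw [Pi.mul_apply, norm_mul, pow_add, mul_mul_mul_comm]
    have h0 := (norm_nonneg _).trans (h r R hr hR hR' z hz)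
    exact mul_le_mul (h r R hr hR hR' z hz) (h' r R hr hR hR' z hz) (norm_nonneg _) h0
  add_mem' := by
    rintro u v ⟨hu, C, k, hC, h⟩ ⟨hv, C', k', hC', h'⟩
    refine ⟨hu.add hv, C + C', max k k', by positivity, fun r R hr hR hR' z hz ↦ ?_⟩
    have h1 : 1 ≤ R * (1 + T R) / (R - r) := by
      have := hT R (hr.trans hR.le)
      rw [one_le_div (by linarith)]
      nlinarith
    rw [Pi.add_apply, add_mul]
    refine (norm_add_le _ _).trans (add_le_add ((h r R hr hR hR' z hz).trans ?_)
      ((h' r R hr hR hR' z hz).trans ?_))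
    · gcongr
      exact le_max_left _ _
    · gcongr
      exact le_max_right _ _
  algebraMap_mem' c := by
    refine ⟨differentiable_const c, ‖c‖, 0, norm_nonneg c, fun r R _ _ _ z _ ↦ ?_⟩
    simp

section moderateGrowth

variable {T : ℝ → ℝ} {hT : ∀ R, 1 ≤ R → 0 ≤ T R}

theorem differentiable_of_mem_moderateGrowth {u : ℂ → ℂ} (hu : u ∈ moderateGrowth T hT) :
    Differentiable ℂ u :=
  hu.1

theorem deriv_mem_moderateGrowth {u : ℂ → ℂ} (hu : u ∈ moderateGrowth T hT) :
    deriv u ∈ moderateGrowth T hT := by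
  obtain ⟨hu, C, k, hC, h⟩ := hu
  refine ⟨hu.deriv, C * 2 ^ (k + 1), k + 1, by positivity, fun r R hr hR hR' z hz ↦ ?_⟩
  have hs : 0 < R - r := sub_pos.2 hR
  have hTR := hT R (hr.trans hR.le)
  have hΛ : 1 / (R - r) ≤ R * (1 + T R) / (R - r) := by
    gcongr
    nlinarith
  refine (Complex.norm_deriv_le_of_forall_mem_sphere_norm_le (half_pos hs) hu.diffContOnCl
    fun w hw ↦ h ((r + R) / 2) R (by linarith) (by linarith) (by linarith) w ?_).trans ?_
  · have h1 := norm_sub_norm_le w z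
    rw [mem_sphere, dist_eq_norm] at hw
    linarith
  · have h2 : R * (1 + T R) / (R - (r + R) / 2) = 2 * (R * (1 + T R) / (R - r)) := by
      rw [show R - (r + R) / 2 = (R - r) / 2 by ring]
      field_simp
    rw [h2]
    calc C * (2 * (R * (1 + T R) / (R - r))) ^ k / ((R - r) / 2)
        = C * 2 ^ (k + 1) * (R * (1 + T R) / (R - r)) ^ k * (1 / (R - r)) := by
          rw [mul_pow, pow_succ]
          field_simp
      _ ≤ C * 2 ^ (k + 1) * (R * (1 + T R) / (R - r)) ^ k * (R * (1 + T R) / (R - r)) := by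
          have hR0 : 0 < R := by linarith
          gcongr
      _ = _ := by ring

theorem logDeriv_mem_moderateGrowth {f : ℂ → ℂ} (hf : Differentiable ℂ f) (hf0 : ∀ z, f z ≠ 0)
    (hfT : ∀ R, 1 ≤ R → characteristic f ⊤ R ≤ T R) :
    (fun z ↦ deriv f z / f z) ∈ moderateGrowth T hT := by
  obtain ⟨C, hC, h⟩ := norm_logDeriv_le hf hf0
  refine ⟨hf.deriv.div hf hf0, C, 2, hC, fun r R hr hR hR' z hz ↦ ?_⟩
  have hs : 0 < R - r := sub_pos.2 hR
  have hR1 : 1 ≤ R := hr.trans hR.le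
  have hTR := hT R hR1
  have hfR := hfT R hR1
  have h0 : 0 ≤ characteristic f ⊤ R := characteristic_nonneg hR1
  have h1 : 1 ≤ R * (1 + T R) := by nlinarith
  calc ‖deriv f z / f z‖
      ≤ C * (R * (1 + characteristic f ⊤ R)) / (R - ‖z‖) ^ 2 := h R hR1 z (hz.trans_lt hR)
    _ ≤ C * (R * (1 + T R)) / (R - r) ^ 2 := by gcongr
    _ ≤ C * (R * (1 + T R)) ^ 2 / (R - r) ^ 2 := by
        gcongr
        exact le_self_pow₀ h1 two_ne_zero
    _ = _ := by rw [div_pow, mul_div_assoc]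

theorem proximity_le_of_mem_moderateGrowth {u : ℂ → ℂ} (hu : u ∈ moderateGrowth T hT) :
    ∃ C : ℝ, 0 ≤ C ∧ ∀ r R, 1 ≤ r → r < R → R ≤ r + 1 →
      proximity u ⊤ r ≤ C * (1 + Real.log (R * (1 + T R) / (R - r))) := by
  obtain ⟨hu, C, k, hC, h⟩ := hu
  refine ⟨C.posLog + k, add_nonneg Real.posLog_nonneg k.cast_nonneg, fun r R hr hR hR' ↦ ?_⟩
  have hm : Meromorphic u := fun z ↦ (hu.analyticAt z).meromorphicAt
  have hΛ : 1 ≤ R * (1 + T R) / (R - r) := by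
    have := hT R (hr.trans hR.le)
    rw [one_le_div (by linarith)]
    nlinarith
  have hlog := Real.log_nonneg hΛ
  rw [proximity_top]
  refine Real.circleAverage_mono_on_of_le_circle hm.meromorphicOn.circleIntegrable_posLog_norm
    fun z hz ↦ ?_
  have hz' : ‖z‖ ≤ r := by
    rw [mem_sphere, dist_zero_right, abs_of_nonneg (by linarith)] at hz
    exact hz.le
  calc Real.posLog ‖u z‖
      ≤ Real.posLog (C * (R * (1 + T R) / (R - r)) ^ k) :=
        Real.posLog_le_posLog (norm_nonneg _) (h r R hr hR hR' z hz')
    _ ≤ C.posLog + Real.posLog ((R * (1 + T R) / (R - r)) ^ k) := Real.posLog_mul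
    _ = C.posLog + k * Real.log (R * (1 + T R) / (R - r)) := by
        rw [Real.posLog_eq_log (x := (R * (1 + T R) / (R - r)) ^ k)
          ((one_le_pow₀ hΛ).trans (le_abs_self _)), Real.log_pow]
    _ ≤ _ := by
        have := Real.posLog_nonneg (x := C)
        have : (0 : ℝ) ≤ k := k.cast_nonneg
        nlinarith

theorem characteristic_le_of_isQuotientMultiple {f : ℂ → ℂ} (hf : Differentiable ℂ f)
    (h : IsQuotientMultiple (moderateGrowth T hT) f 1) :
    ∃ C : ℝ, 0 ≤ C ∧ ∀ r R, 1 ≤ r → r < R → R ≤ r + 1 →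
      characteristic f ⊤ r ≤ C * (1 + Real.log (R * (1 + T R) / (R - r))) := by
  obtain ⟨a, ha, b, hb, ha0, hab⟩ := h
  have had := differentiable_of_mem_moderateGrowth ha
  have hbd := differentiable_of_mem_moderateGrowth hb
  obtain ⟨A, hA, hA'⟩ := proximity_le_of_mem_moderateGrowth ha
  obtain ⟨B, hB, hB'⟩ := proximity_le_of_mem_moderateGrowth hb
  obtain ⟨C, hC, hC'⟩ := proximity_inv_top_le had
  refine ⟨A + B + C, by positivity, fun r R hr hR hR' ↦ ?_⟩
  obtain ⟨z₀, hz₀⟩ := Function.ne_iff.1 ha0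
  have hcod : f =ᶠ[codiscrete ℂ] b * a⁻¹ := by
    filter_upwards [AnalyticOnNhd.preimage_zero_mem_codiscrete (fun z _ ↦ had.analyticAt z) hz₀]
      with z hz
    have hz' : a z ≠ 0 := hz
    have := congrFun hab z
    simp only [Pi.mul_apply, Pi.one_apply, mul_one] at this
    rw [Pi.mul_apply, Pi.inv_apply, ← this]
    field_simp
  have hmul := proximity_mul_top_le (fun z ↦ (hbd.analyticAt z).meromorphicAt)
    (fun z ↦ (had.analyticAt z).meromorphicAt.inv) r
  rw [characteristic_top_eq_proximity hf, proximity_congr_codiscrete hcod (by linarith)]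
  have hlog : 0 ≤ Real.log (R * (1 + T R) / (R - r)) := by
    have := hT R (hr.trans hR.le)
    refine Real.log_nonneg ?_
    rw [one_le_div (by linarith)]
    nlinarith
  have h1 := hA' r R hr hR hR'
  have h2 := hB' r R hr hR hR'
  have h3 := hC' r hr
  rw [characteristic_top_eq_proximity had] at h3
  rw [Pi.add_apply] at hmul
  nlinarith

end moderateGrowth

theorem exists_le_log_of_le_log {T : ℝ → ℝ} (hT : ∀ R, 1 ≤ R → 0 ≤ T R)
    (hmono : MonotoneOn T (Ici 1)) {C : ℝ} (hC : 0 ≤ C)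
    (h : ∀ r R, 1 ≤ r → r < R → R ≤ r + 1 →
      T r ≤ C * (1 + Real.log (R * (1 + T R) / (R - r)))) :
    ∃ D : ℝ, 0 ≤ D ∧ ∀ r, 1 ≤ r → 1 + T r ≤ D * (1 + Real.log (r + 2)) := by
  refine ⟨(C + 1) * (8 * (C + 1) + 2), by positivity, fun r hr ↦ ?_⟩
  set D := (C + 1) * (8 * (C + 1) + 2) with hD
  have hD0 : 0 < D := by positivity
  by_contra! hlt
  set l := 1 + Real.log (r + 2) with hl
  have hl1 : 1 ≤ l := by
    have := Real.log_nonneg (x := r + 2) (by linarith)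
    linarith
  let ρ : ℕ → ℝ := fun k ↦ r + 1 - (1 / 2) ^ k
  have hρ1 : ∀ k, 1 ≤ ρ k := fun k ↦ by
    have : ((1 : ℝ) / 2) ^ k ≤ 1 := pow_le_one₀ (by norm_num) (by norm_num)
    simp only [ρ]
    linarith
  have hρ2 : ∀ k, ρ k ≤ r + 1 := fun k ↦ by
    have : 0 < ((1 : ℝ) / 2) ^ k := by positivity
    simp only [ρ]
    linarith
  have key : ∀ k : ℕ, D * (l + k) ≤ 1 + T (ρ k) := fun k ↦ by
    induction k with
    | zero => simpa [ρ] using hlt.le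
    | succ k ih =>
      have hδ : ρ (k + 1) - ρ k = (1 / 2) ^ (k + 1) := by
        simp only [ρ]
        ring
      have hδ0 : 0 < ((1 : ℝ) / 2) ^ (k + 1) := by positivity
      have hδ1 : ((1 : ℝ) / 2) ^ (k + 1) ≤ 1 := pow_le_one₀ (by norm_num) (by norm_num)
      have hT1 := hT _ (hρ1 (k + 1))
      have hb := h (ρ k) (ρ (k + 1)) (hρ1 k) (by linarith) (by linarith)
      have hlog : Real.log (ρ (k + 1) * (1 + T (ρ (k + 1))) / (ρ (k + 1) - ρ k)) ≤
          (l - 1) + Real.log (1 + T (ρ (k + 1))) + (k + 1) := by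
        have hρ0 : 0 < ρ (k + 1) := one_pos.trans_le (hρ1 _)
        rw [hδ, Real.log_div (by positivity) (by positivity),
          Real.log_mul (by positivity) (by positivity), Real.log_pow, one_div, Real.log_inv]
        have h1 : Real.log (ρ (k + 1)) ≤ Real.log (r + 2) :=
          Real.log_le_log hρ0 (by linarith [hρ2 (k + 1)])
        have h2 := Real.log_two_lt_d9
        push_cast
        nlinarith
      have hlT := Real.log_nonneg (x := 1 + T (ρ (k + 1))) (by linarith)
      have hk : (0 : ℝ) ≤ k := k.cast_nonneg
      have h3 : 1 + T (ρ k) ≤ (C + 1) * (l + Real.log (1 + T (ρ (k + 1))) + (k + 1)) := by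
        nlinarith
      have h4 : (8 * (C + 1) + 2) * (l + k) ≤ l + Real.log (1 + T (ρ (k + 1))) + (k + 1) := by
        refine le_of_mul_le_mul_left ?_ (show 0 < C + 1 by linarith)
        calc _ = D * (l + k) := by rw [hD]; ring
          _ ≤ _ := ih.trans h3
      have h5 : 8 * (C + 1) * (l + k) ≤ Real.log (1 + T (ρ (k + 1))) := by nlinarith
      rw [Real.le_log_iff_exp_le (by linarith)] at h5
      have h6 := Real.quadratic_le_exp_of_nonneg (x := 8 * (C + 1) * (l + k)) (by positivity)
      refine le_trans ?_ (h6.trans h5)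
      have hx : 1 ≤ l + k := by linarith
      rw [hD, Nat.cast_succ, ← add_assoc]
      generalize l + (k : ℝ) = x at hx
      have hc : 0 ≤ (C + 1) * (x - 1) := by nlinarith
      have hc' : 0 ≤ (C + 1) ^ 2 * ((x - 1) * (4 * x + 2)) := by
        have := mul_nonneg (sub_nonneg.2 hx) (show 0 ≤ 4 * x + 2 by linarith)
        positivity
      nlinarith [mul_nonneg (sq_nonneg (C + 1)) (sq_nonneg x)]
  obtain ⟨k, hk⟩ := exists_nat_gt (1 + T (r + 1))
  have h1 := key k
  have h2 := hmono (hρ1 k) (show 1 ≤ r + 1 by linarith) (hρ2 k)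
  have hD1 : 1 ≤ D := by nlinarith
  nlinarith

theorem eq_const_of_characteristic_le_log {f : ℂ → ℂ} (hf : Differentiable ℂ f)
    (hf0 : ∀ z, f z ≠ 0) {D : ℝ} (hD : 0 ≤ D)
    (h : ∀ r, 1 ≤ r → 1 + characteristic f ⊤ r ≤ D * (1 + Real.log (r + 2))) (z w : ℂ) :
    f z = f w := by
  refine is_const_of_deriv_eq_zero hf (fun z ↦ ?_) z w
  obtain ⟨C, hC, hlog⟩ := norm_logDeriv_le hf hf0
  suffices hle : ‖deriv f z / f z‖ ≤ 0 by
    exact (div_eq_zero_iff.1 (norm_le_zero_iff.1 hle)).resolve_right (hf0 z)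
  have hlim : Tendsto (fun R : ℝ ↦ 4 * C * D * ((1 + Real.log 3) * R⁻¹ + Real.log R / R)) atTop
      (nhds 0) := by
    simpa using ((tendsto_inv_atTop_zero.const_mul (1 + Real.log 3)).add
      Real.isLittleO_log_id_atTop.tendsto_div_nhds_zero).const_mul (4 * C * D)
  refine ge_of_tendsto hlim ?_
  filter_upwards [eventually_ge_atTop 1, eventually_gt_atTop (2 * ‖z‖)] with R hR hRz
  have hz := norm_nonneg z
  have h1 : Real.log (R + 2) ≤ Real.log 3 + Real.log R := by
    rw [← Real.log_mul (by norm_num) (by linarith)]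
    exact Real.log_le_log (by linarith) (by linarith)
  have h0 : 0 ≤ characteristic f ⊤ R := characteristic_nonneg hR
  calc ‖deriv f z / f z‖
      ≤ C * (R * (1 + characteristic f ⊤ R)) / (R - ‖z‖) ^ 2 := hlog R hR z (by linarith)
    _ ≤ C * (R * (D * (1 + (Real.log 3 + Real.log R)))) / (R / 2) ^ 2 := by
        gcongr
        · have := Real.log_nonneg hR
          positivity
        · exact (h R hR).trans (by gcongr)
        · linarith
    _ = _ := by
        field_simp
        ring

theorem exists_eq_const_mul_of_sum_eq_zero {ι : Type*} {g : ι → ℂ → ℂ}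
    (hg : ∀ i, Differentiable ℂ (g i)) (hg0 : ∀ i z, g i z ≠ 0) {I : Finset ι} (hI : I.Nonempty)
    (hrel : ∑ i ∈ I, g i = 0) :
    ∃ i ∈ I, ∃ j ∈ I, i ≠ j ∧ ∃ c : ℂ, c ≠ 0 ∧ ∀ z, g i z = c * g j z := by
  classical
  induction I using Finset.strongInduction with
  | H I ih =>
  obtain ⟨j, hj⟩ := hI
  let f : ι → ℂ → ℂ := fun i z ↦ g i z / g j z
  have hf : ∀ i, Differentiable ℂ (f i) := fun i ↦ (hg i).div (hg j) (hg0 j)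
  have hf0 : ∀ i z, f i z ≠ 0 := fun i z ↦ div_ne_zero (hg0 i z) (hg0 j z)
  have hfg : ∀ A : Finset ι, ∑ i ∈ A, f i = 0 ↔ ∑ i ∈ A, g i = 0 := fun A ↦ by
    simp only [funext_iff, Finset.sum_apply, f, ← Finset.sum_div, Pi.zero_apply, div_eq_zero_iff,
      hg0, or_false]
  let T : ℝ → ℝ := fun R ↦ ∑ i ∈ I, characteristic (f i) ⊤ R
  have hT : ∀ R, 1 ≤ R → 0 ≤ T R := fun R hR ↦
    Finset.sum_nonneg fun i _ ↦ characteristic_nonneg hR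
  have hfT : ∀ i ∈ I, ∀ R, 1 ≤ R → characteristic (f i) ⊤ R ≤ T R := fun i hi R hR ↦
    Finset.single_le_sum (f := fun i ↦ characteristic (f i) ⊤ R)
      (fun i _ ↦ characteristic_nonneg hR) hi
  let S := moderateGrowth T hT
  let A := I.filter fun i ↦ IsQuotientMultiple S (f i) 1
  let B := I.filter fun i ↦ ¬ IsQuotientMultiple S (f i) 1
  have hAB : A ∪ B = I := Finset.filter_union_filter_not_eq _ I
  have hA0 : ∑ i ∈ A, f i = 0 := by
    have := sum_eq_zero_of_sum_add_sum_eq_zero (S := S) (A := A) (B := B) (g := f) (v := 1)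
      (L := fun i z ↦ deriv (f i) z / f i z) (a := 1)
      (fun a ha ↦ differentiable_of_mem_moderateGrowth ha) (fun a ha ↦ deriv_mem_moderateGrowth ha)
      hf (fun i h ↦ hf0 i 0 (congrFun h 0))
      (fun i hi ↦ logDeriv_mem_moderateGrowth (hf i) (hf0 i) (hfT i (hAB ▸ hi)))
      (fun i _ ↦ funext fun z ↦ (div_mul_cancel₀ _ (hf0 i z)).symm)
      (fun i hi ↦ (Finset.mem_filter.1 hi).2) (fun i hi ↦ (Finset.mem_filter.1 hi).2)
      (fun i _ ↦ S.one_mem) (by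
        simp only [Pi.one_apply, one_mul]
        rw [Finset.sum_filter_add_sum_filter_not, hfg, hrel])
    simpa using this
  have hfj : f j = 1 := funext fun z ↦ div_self (hg0 j z)
  have hjA : j ∈ A := Finset.mem_filter.2 ⟨hj, hfj ▸ IsQuotientMultiple.refl S 1⟩
  rcases (Finset.filter_subset _ I : A ⊆ I).eq_or_ssubset with hAI | hAI
  · have hchar : ∀ i ∈ I, ∃ C : ℝ, 0 ≤ C ∧ ∀ r R, 1 ≤ r → r < R → R ≤ r + 1 →
        characteristic (f i) ⊤ r ≤ C * (1 + Real.log (R * (1 + T R) / (R - r))) := fun i hi ↦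
      characteristic_le_of_isQuotientMultiple (hf i) (Finset.mem_filter.1 (hAI.symm.subset hi)).2
    choose! C hC hC' using hchar
    obtain ⟨D, hD, hD'⟩ := exists_le_log_of_le_log hT
      (fun x hx y hy hxy ↦ Finset.sum_le_sum fun i _ ↦
        characteristic_monotoneOn (fun z ↦ ((hf i).analyticAt z).meromorphicAt)
          (mem_Ioi.2 (one_pos.trans_le (mem_Ici.1 hx)))
          (mem_Ioi.2 (one_pos.trans_le (mem_Ici.1 hy))) hxy)
      (Finset.sum_nonneg hC) (fun r R hr hR hR' ↦ by
        rw [Finset.sum_mul]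
        exact Finset.sum_le_sum fun i hi ↦ hC' i hi r R hr hR hR')
    obtain ⟨i, hi, hij⟩ : ∃ i ∈ I, i ≠ j := by
      by_contra! hall
      have : I = {j} := Finset.eq_singleton_iff_unique_mem.2 ⟨hj, hall⟩
      rw [this, Finset.sum_singleton] at hrel
      exact hg0 j 0 (congrFun hrel 0)
    refine ⟨i, hi, j, hj, hij, f i 0, hf0 i 0, fun z ↦ ?_⟩
    rw [eq_const_of_characteristic_le_log (hf i) (hf0 i) hD (fun r hr ↦
      (add_le_add_right (hfT i hi r hr) 1).trans (hD' r hr)) 0 z]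
    exact (div_mul_cancel₀ _ (hg0 j z)).symm
  · obtain ⟨i, hi, k, hk, h⟩ := ih A hAI ⟨j, hjA⟩ ((hfg A).1 hA0)
    exact ⟨i, hAI.1 hi, k, hAI.1 hk, h⟩

end

/-- classical Borel theorem: if `g_1, …, g_m` are nowhere-vanishing
entire functions with `g_1 + ⋯ + g_m ≡ 0` and `m ≥ 3`, then some ratio `g_i / g_j`
(`i ≠ j`) is a nonzero constant. -/
theorem stmt_11 (m : ℕ) (hm : 3 ≤ m) (g : Fin m → ℂ → ℂ)
    (hg : ∀ i, Differentiable ℂ (g i)) (hg0 : ∀ i z, g i z ≠ 0)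
    (hrel : ∀ z : ℂ, ∑ i, g i z = 0) :
    ∃ i j : Fin m, i ≠ j ∧ ∃ c : ℂ, c ≠ 0 ∧ ∀ z, g i z = c * g j z := by
  obtain ⟨i, -, j, -, hij, h⟩ := exists_eq_const_mul_of_sum_eq_zero hg hg0
    (I := Finset.univ) ⟨⟨0, by omega⟩, Finset.mem_univ _⟩ (by
      ext z
      simpa using hrel z)
  exact ⟨i, j, hij, h⟩
end
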